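/- arXiv:math/0103044 — 4 statements merged into one kernel-verified Lean document; each statement's English description precedes it below -/
import Mathlib

section
/- Let (Φ, 1, N, *) be a fusion ring. Then there exists a unitary complex matrix S indexed by Φ×Φ with S_{1,i} > 0 and S_{a,1} > 0 for all a, i ∈ Φ, satisfying Verlinde's formula N_{ab}^c = ∑_{i∈Φ} S_{ai} S_{bi} conj(S_{ci})/S_{1,i} for all a, b, c ∈ Φ; moreover S is unique up to a permutation of its columns (any two such matrices differ by right multiplication by a permutation matrix). Furthermore, the fusion ring is self-dual if and only if there exist bijections ι, ι' : Φ → Φ such that S_{a, ι'b} = S_{b, ιa} for all a, b ∈ Φ. -/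
open scoped BigOperators
open Complex

/-- A fusion ring on a finite set `Φ`: a distinguished identity element, nonnegative rational
structure constants `N a b c`, and an involution `star` with `star one = one`, such that the
induced product on the free `ℚ`-vector space on `Φ` is commutative, associative, has `one` as
identity, the linear extension of `star` is a ring homomorphism, and `N a b one = δ_{b, a*}`. -/
structure FusionRing (Φ : Type) [Fintype Φ] [DecidableEq Φ] where
  one : Φ
  N : Φ → Φ → Φ → ℚ
  star : Φ → Φ
  N_nonneg : ∀ a b c, 0 ≤ N a b c
  mul_comm : ∀ a b c, N a b c = N b a c
  one_mul : ∀ a c, N one a c = if a = c then 1 else 0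
  mul_assoc : ∀ a b c e, ∑ d, N a b d * N d c e = ∑ d, N b c d * N a d e
  star_involutive : ∀ a, star (star a) = a
  star_one : star one = one
  star_hom : ∀ a b c, N (star a) (star b) (star c) = N a b c
  N_one : ∀ a b, N a b one = if b = star a then 1 else 0

/-- The canonical unitary matrix of a fusion ring: a unitary `Φ×Φ` complex matrix whose
`one`-row and `one`-column entries are real and strictly positive, satisfying Verlinde's
formula for the structure constants. -/
def IsCanonicalS {Φ : Type} [Fintype Φ] [DecidableEq Φ] (F : FusionRing Φ)
    (S : Matrix Φ Φ ℂ) : Prop :=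
  S * S.conjTranspose = 1 ∧
  (∀ i, (S F.one i).im = 0 ∧ 0 < (S F.one i).re) ∧
  (∀ a, (S a F.one).im = 0 ∧ 0 < (S a F.one).re) ∧
  (∀ a b c, (F.N a b c : ℂ) = ∑ i, S a i * S b i * (starRingEnd ℂ) (S c i) / S F.one i)


section Helpers

variable {Φ : Type} [Fintype Φ] [DecidableEq Φ]

/-- A normalized character column. -/
structure IsCol (F : FusionRing Φ) (v : Φ → ℂ) : Prop where
  im : (v F.one).im = 0
  pos : 0 < (v F.one).re
  nrm : ∑ a, (starRingEnd ℂ) (v a) * v a = 1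
  eig : ∀ a b, v F.one * ∑ c, (F.N a b c : ℂ) * v c = v a * v b

lemma FusionRing.mul_one' (F : FusionRing Φ) (a c : Φ) :
    F.N a F.one c = if a = c then 1 else 0 := by
  rw [F.mul_comm, F.one_mul]

lemma FusionRing.N_star (F : FusionRing Φ) (a b c : Φ) :
    F.N (F.star a) b c = F.N a c b := by
  have key : ∀ a b c, F.N a b (F.star c) = F.N b c (F.star a) := by
    intro a b c
    have h := F.mul_assoc a b c F.one
    have e : ∀ d, (c = F.star d) ↔ (F.star c = d) := fun d =>
      ⟨fun h => by rw [h, F.star_involutive], fun h => by rw [← h, F.star_involutive]⟩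
    simpa [F.N_one, e] using h
  have h1 := key (F.star a) b (F.star c)
  have h2 := F.star_hom b (F.star c) a
  have h3 := key (F.star b) c a
  rw [F.star_involutive] at h1 h2 h3
  rw [F.star_involutive] at h1
  rw [h1, ← h2, h3, F.mul_comm]

lemma IsCol.ne {F : FusionRing Φ} {v : Φ → ℂ} (h : IsCol F v) : v F.one ≠ 0 := by
  intro h0
  have := h.pos
  rw [h0] at this
  simp at this

lemma IsCol.conj_one {F : FusionRing Φ} {v : Φ → ℂ} (h : IsCol F v) :
    (starRingEnd ℂ) (v F.one) = v F.one := Complex.conj_eq_iff_im.2 h.im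

lemma IsCol.conj_of {F : FusionRing Φ} {v w : Φ → ℂ} (hv : IsCol F v) (hw : IsCol F w)
    (hvw : ∑ a, (starRingEnd ℂ) (v a) * w a ≠ 0) (a : Φ) :
    w a * v F.one = (starRingEnd ℂ) (v (F.star a)) * w F.one := by
  have h1 : w F.one * ∑ b, (starRingEnd ℂ) (v b) * ∑ c, (F.N a b c : ℂ) * w c =
      w a * ∑ b, (starRingEnd ℂ) (v b) * w b := by
    rw [Finset.mul_sum, Finset.mul_sum]
    refine Finset.sum_congr rfl fun b _ => ?_
    linear_combination (starRingEnd ℂ) (v b) * hw.eig a b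
  have h2 : v F.one * ∑ c, w c * ∑ b, (F.N (F.star a) c b : ℂ) * (starRingEnd ℂ) (v b) =
      (starRingEnd ℂ) (v (F.star a)) * ∑ b, (starRingEnd ℂ) (v b) * w b := by
    rw [Finset.mul_sum, Finset.mul_sum]
    refine Finset.sum_congr rfl fun b _ => ?_
    have := congrArg (starRingEnd ℂ) (hv.eig (F.star a) b)
    simp only [map_mul, map_sum, hv.conj_one, map_ratCast] at this
    linear_combination w b * this
  have h3 : ∑ b, (starRingEnd ℂ) (v b) * ∑ c, (F.N a b c : ℂ) * w c =
      ∑ c, w c * ∑ b, (F.N (F.star a) c b : ℂ) * (starRingEnd ℂ) (v b) := by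
    simp only [Finset.mul_sum, F.N_star]
    rw [Finset.sum_comm]
    refine Finset.sum_congr rfl fun c _ => Finset.sum_congr rfl fun b _ => by ring
  rw [h3] at h1
  apply mul_right_cancel₀ hvw
  linear_combination w F.one * h2 - v F.one * h1

lemma IsCol.eq_of {F : FusionRing Φ} {v w : Φ → ℂ} (hv : IsCol F v) (hw : IsCol F w)
    (hvw : ∑ a, (starRingEnd ℂ) (v a) * w a ≠ 0) : v = w := by
  have hvv : ∑ a, (starRingEnd ℂ) (v a) * v a ≠ 0 := by rw [hv.nrm]; exact one_ne_zero
  have h : ∀ a, w a * v F.one = v a * w F.one := by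
    intro a
    have h1 := hv.conj_of hw hvw a
    have h2 := hv.conj_of hv hvv a
    apply mul_right_cancel₀ hv.ne
    linear_combination v F.one * h1 - w F.one * h2
  have hsq : v F.one * v F.one = w F.one * w F.one := by
    have e : ∑ a, ((starRingEnd ℂ) (w a * v F.one)) * (w a * v F.one) =
        ∑ a, ((starRingEnd ℂ) (v a * w F.one)) * (v a * w F.one) := by simp only [h]
    simp only [map_mul, hv.conj_one, hw.conj_one] at e
    have e1 : ∑ a, ((starRingEnd ℂ) (w a) * v F.one) * (w a * v F.one) =
        (v F.one * v F.one) * ∑ a, (starRingEnd ℂ) (w a) * w a := by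
      rw [Finset.mul_sum]; exact Finset.sum_congr rfl fun _ _ => by ring
    have e2 : ∑ a, ((starRingEnd ℂ) (v a) * w F.one) * (v a * w F.one) =
        (w F.one * w F.one) * ∑ a, (starRingEnd ℂ) (v a) * v a := by
      rw [Finset.mul_sum]; exact Finset.sum_congr rfl fun _ _ => by ring
    rw [e1, e2, hv.nrm, hw.nrm] at e
    simpa using e
  have h1 : v F.one = w F.one := by
    rcases mul_self_eq_mul_self_iff.1 hsq with h | h
    · exact h
    · have p1 := hv.pos
      have p2 := hw.pos
      rw [h] at p1
      simp at p1
      linarith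
  funext a
  have := h a
  rw [← h1] at this
  exact (mul_right_cancel₀ hv.ne this).symm

lemma unit_row {S : Matrix Φ Φ ℂ} (h : S * S.conjTranspose = 1) (a b : Φ) :
    ∑ i, S a i * (starRingEnd ℂ) (S b i) = if a = b then 1 else 0 := by
  have := congrFun (congrFun h a) b
  simpa [Matrix.mul_apply, Matrix.one_apply] using this

lemma unit_col {S : Matrix Φ Φ ℂ} (h : S * S.conjTranspose = 1) (i j : Φ) :
    ∑ a, (starRingEnd ℂ) (S a i) * S a j = if i = j then 1 else 0 := by
  have := congrFun (congrFun (show S.conjTranspose * S = 1 from mul_eq_one_comm.1 h) i) j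
  simpa [Matrix.mul_apply, Matrix.one_apply] using this

/-- Columns of a matrix satisfying Verlinde's formula are characters. -/
lemma IsCanonicalS.isCol {F : FusionRing Φ} {S : Matrix Φ Φ ℂ} (h : IsCanonicalS F S) (i : Φ) :
    IsCol F (fun a => S a i) := by
  obtain ⟨hU, hr, hc, hV⟩ := h
  have hne : S F.one i ≠ 0 := by
    intro h0
    have := (hr i).2
    rw [h0] at this
    simp at this
  refine ⟨(hr i).1, (hr i).2, by simpa using unit_col hU i i, fun a b => ?_⟩
  have : ∑ c, (F.N a b c : ℂ) * S c i = S a i * S b i / S F.one i := by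
    simp only [hV, Finset.sum_mul]
    rw [Finset.sum_comm]
    have : ∀ j, ∑ c, S a j * S b j * (starRingEnd ℂ) (S c j) / S F.one j * S c i =
        S a j * S b j / S F.one j * (if j = i then 1 else 0) := by
      intro j
      rw [← unit_col hU j i, Finset.mul_sum]
      exact Finset.sum_congr rfl fun _ _ => by ring
    simp [this]
  simp only [this]
  field_simp

/-- A unitary matrix whose columns are characters satisfies Verlinde's formula. -/
lemma verlinde_of {F : FusionRing Φ} {S : Matrix Φ Φ ℂ} (hU : S * S.conjTranspose = 1)
    (h : ∀ i, IsCol F (fun a => S a i)) (a b c : Φ) :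
    (F.N a b c : ℂ) = ∑ i, S a i * S b i * (starRingEnd ℂ) (S c i) / S F.one i := by
  have e : ∀ i, S a i * S b i * (starRingEnd ℂ) (S c i) / S F.one i =
      ∑ d, (F.N a b d : ℂ) * (S d i * (starRingEnd ℂ) (S c i)) := by
    intro i
    rw [div_eq_iff (h i).ne, ← (h i).eig a b, Finset.mul_sum, Finset.sum_mul, Finset.sum_mul]
    exact Finset.sum_congr rfl fun _ _ => by ring
  simp only [e]
  rw [Finset.sum_comm]
  simp [← Finset.mul_sum, unit_row hU]

lemma unique_S {F : FusionRing Φ} {S S' : Matrix Φ Φ ℂ} (h : IsCanonicalS F S)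
    (h' : IsCanonicalS F S') : ∃ σ : Equiv.Perm Φ, ∀ a i, S' a i = S a (σ i) := by
  have key : ∀ i, ∃ j, ∀ a, S' a i = S a j := by
    intro i
    by_contra hcon
    push Not at hcon
    have hz : ∀ j, ∑ a, (starRingEnd ℂ) (S a j) * S' a i = 0 := by
      intro j
      by_contra hne
      have := (h.isCol j).eq_of (h'.isCol i) hne
      obtain ⟨a, ha⟩ := hcon j
      exact ha (congrFun this a).symm
    have : S.conjTranspose.mulVec (fun a => S' a i) = 0 := by
      funext j
      simpa [Matrix.mulVec, dotProduct] using hz j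
    have h2 := congrArg S.mulVec this
    rw [Matrix.mulVec_mulVec, h.1, Matrix.one_mulVec, Matrix.mulVec_zero] at h2
    exact (h'.isCol i).ne (congrFun h2 F.one)
  choose f hf using key
  have hinj : Function.Injective f := by
    intro i j hij
    by_contra hne
    have h1 := unit_col h'.1 i j
    have h2 := unit_col h'.1 i i
    simp only [hf, hij, if_neg hne] at h1 h2
    rw [h1] at h2
    simp at h2
  exact ⟨Equiv.ofBijective f (Finite.injective_iff_bijective.1 hinj), fun a i => hf i a⟩

lemma selfdual_iff {F : FusionRing Φ} {S : Matrix Φ Φ ℂ} (h : IsCanonicalS F S) :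
    (∃ ι : Equiv.Perm Φ, ∀ a b c, (F.N a b c : ℂ) =
          ∑ x, S x (ι a) * S x (ι b) * (starRingEnd ℂ) (S x (ι c)) / S x F.one) ↔
        (∃ ι ι' : Equiv.Perm Φ, ∀ a b, S a (ι' b) = S b (ι a)) := by
  constructor
  · rintro ⟨ι, hι⟩
    obtain ⟨T, hT⟩ : ∃ T : Matrix Φ Φ ℂ, ∀ a x, T a x = S x (ι a) :=
      ⟨Matrix.of fun a x => S x (ι a), fun _ _ => rfl⟩
    have hTU : T * T.conjTranspose = 1 := by
      ext a b
      have := unit_col h.1 (ι b) (ι a)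
      simp only [ι.injective.eq_iff] at this
      simp only [Matrix.mul_apply, Matrix.conjTranspose_apply, Matrix.one_apply, hT]
      simp only [eq_comm (a := a), ← this]
      exact Finset.sum_congr rfl fun _ _ => by simp [_root_.mul_comm]
    have hpos : ∀ x, S x F.one ≠ 0 := by
      intro x h0
      have := (h.2.2.1 x).2
      rw [h0] at this
      simp at this
    have hD : T * Matrix.diagonal (fun x => T F.one x / S x F.one) * T.conjTranspose = 1 := by
      ext b c
      have := hι F.one b c
      rw [F.one_mul] at this
      have e : ((if b = c then (1 : ℚ) else 0 : ℚ) : ℂ) = if b = c then 1 else 0 := by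
        split_ifs <;> simp
      rw [e] at this
      rw [Matrix.mul_apply, Matrix.one_apply, this]
      simp only [Matrix.conjTranspose_apply, Matrix.mul_diagonal]
      exact Finset.sum_congr rfl fun _ _ => by simp [hT]; ring
    have hD' : Matrix.diagonal (fun x => T F.one x / S x F.one) = 1 := by
      have h1 := mul_eq_one_comm.1 hTU
      calc Matrix.diagonal (fun x => T F.one x / S x F.one)
          = (T.conjTranspose * T) * Matrix.diagonal (fun x => T F.one x / S x F.one)
            * (T.conjTranspose * T) := by rw [h1]; simp
        _ = T.conjTranspose * (T * Matrix.diagonal (fun x => T F.one x / S x F.one)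
            * T.conjTranspose) * T := by simp only [Matrix.mul_assoc]
        _ = 1 := by rw [hD, Matrix.mul_one, h1]
    have hone : ∀ x, T F.one x = S x F.one := by
      intro x
      have := congrFun (congrFun hD' x) x
      simp only [Matrix.diagonal_apply_eq, Matrix.one_apply_eq] at this
      rwa [div_eq_iff (hpos x), _root_.one_mul] at this
    have hTc : IsCanonicalS F T := by
      refine ⟨hTU, fun i => ?_, fun a => by rw [hT]; exact h.2.1 (ι a), fun a b c => ?_⟩
      · rw [hone]; exact h.2.2.1 i
      · rw [hι]; simp only [hone, hT]
    obtain ⟨σ, hσ⟩ := unique_S h hTc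
    exact ⟨ι, σ, fun a b => by rw [← hσ, hT]⟩
  · rintro ⟨ι, ι', hι⟩
    have hι1 : ι F.one = F.one := by
      by_contra hne
      have h1 := unit_col h.1 (ι F.one) F.one
      rw [if_neg hne] at h1
      have h2 := congrArg Complex.re h1
      simp only [Complex.re_sum, ← hι, Complex.mul_re, Complex.conj_re, Complex.conj_im,
        (h.2.1 _).1, (h.2.2.1 _).1] at h2
      have : 0 < ∑ x, ((S F.one (ι' x)).re * (S x F.one).re - -0 * 0) :=
        Finset.sum_pos (fun x _ => by
          have := mul_pos (h.2.1 (ι' x)).2 (h.2.2.1 x).2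
          simpa using this) ⟨F.one, Finset.mem_univ _⟩
      rw [h2] at this
      simp at this
    refine ⟨ι, fun a b c => ?_⟩
    rw [h.2.2.2, ← Equiv.sum_comp ι']
    simp only [hι, hι1]

/-- Rayleigh bound. -/
lemma rayleigh {F : FusionRing Φ} {S : Matrix Φ Φ ℂ} (hU : S * S.conjTranspose = 1)
    (h : ∀ i, IsCol F (fun a => S a i)) (g : ℝ)
    (hg : ∀ i, (∑ a, S a i / S F.one i).re ≤ g) (w : Φ → ℝ) :
    ∑ b, ∑ c, (∑ a, (F.N a b c : ℝ)) * (w b * w c) ≤ g * ∑ b, w b * w b := by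
  set p : Φ → ℂ := fun i => ∑ c, (starRingEnd ℂ) (S c i) * (w c : ℂ) with hp
  have hpc : ∀ i, (starRingEnd ℂ) (p i) = ∑ c, S c i * (w c : ℂ) := by
    intro i; simp [hp, map_sum]
  have h1 : ((∑ b, ∑ c, (∑ a, (F.N a b c : ℝ)) * (w b * w c) : ℝ) : ℂ) =
      ∑ i, (∑ a, S a i / S F.one i) * ((starRingEnd ℂ) (p i) * p i) := by
    have e1 : ∀ i, (∑ a, S a i / S F.one i) * ((starRingEnd ℂ) (p i) * p i) =
        ∑ b, ∑ c, ∑ a, S a i * S b i * (starRingEnd ℂ) (S c i) / S F.one i * (w b * w c) := by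
      intro i
      rw [hpc, hp]
      simp only [Finset.mul_sum, Finset.sum_mul]
      rw [Finset.sum_comm]
      refine Finset.sum_congr rfl fun b _ => Finset.sum_congr rfl fun c _ =>
        Finset.sum_congr rfl fun a _ => by ring
    simp only [e1]
    push_cast
    symm
    refine Finset.sum_comm.trans (Finset.sum_congr rfl fun b _ => ?_)
    refine Finset.sum_comm.trans (Finset.sum_congr rfl fun c _ => ?_)
    rw [Finset.sum_mul]
    refine Finset.sum_comm.trans (Finset.sum_congr rfl fun a _ => ?_)
    rw [← Finset.sum_mul, ← verlinde_of hU h]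
  have h2 : ∑ i, (starRingEnd ℂ) (p i) * p i = ((∑ b, w b * w b : ℝ) : ℂ) := by
    simp only [hpc]
    simp only [hp, Finset.sum_mul_sum]
    rw [Finset.sum_comm]
    push_cast
    refine Finset.sum_congr rfl fun b _ => ?_
    rw [Finset.sum_comm]
    have : ∀ c, ∑ i, S b i * (w b : ℂ) * ((starRingEnd ℂ) (S c i) * (w c : ℂ)) =
        (w b * w c : ℂ) * (if b = c then 1 else 0) := by
      intro c
      rw [← unit_row hU b c, Finset.mul_sum]
      exact Finset.sum_congr rfl fun _ _ => by ring
    simp [this]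
  have hn : ∀ i, (starRingEnd ℂ) (p i) * p i = ((Complex.normSq (p i) : ℝ) : ℂ) := by
    intro i; rw [Complex.normSq_eq_conj_mul_self]
  have h1' := congrArg Complex.re h1
  have h2' := congrArg Complex.re h2
  simp only [hn, Complex.re_sum, Complex.re_mul_ofReal, Complex.ofReal_re] at h1' h2'
  rw [h1', ← h2', Finset.mul_sum]
  refine Finset.sum_le_sum fun i _ => mul_le_mul_of_nonneg_right ?_ (Complex.normSq_nonneg _)
  have := hg i
  rwa [Complex.re_sum] at this

lemma sum_N_one (F : FusionRing Φ) (b : Φ) : ∑ a, (F.N a b F.one : ℝ) = 1 := by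
  have e : ∀ a, F.N a b F.one = if a = F.star b then 1 else 0 := by
    intro a; rw [F.mul_comm, F.N_one]
  have heq_one : ∀ a, (F.N a b F.one : ℝ) = if a = F.star b then 1 else 0 := by
    intro a; rw [e]; split_ifs <;> simp
  simp [heq_one]

/-- The Perron-Frobenius column. -/
lemma exists_pos_col {F : FusionRing Φ} {S : Matrix Φ Φ ℂ} (hU : S * S.conjTranspose = 1)
    (h : ∀ i, IsCol F (fun a => S a i)) :
    ∃ i, ∀ a, (S a i).im = 0 ∧ 0 < (S a i).re := by
  obtain ⟨i, -, hi⟩ := Finset.exists_max_image Finset.univ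
    (fun i => (∑ a, S a i / S F.one i).re) ⟨F.one, Finset.mem_univ _⟩
  refine ⟨i, ?_⟩
  have hu := h i
  obtain ⟨u, hu'⟩ : ∃ u : Φ → ℂ, ∀ a, S a i = u a := ⟨_, fun _ => rfl⟩
  have hR := rayleigh hU h _ (fun j => hi j (Finset.mem_univ _)) (fun a => ‖u a‖)
  simp only [hu'] at hu hR ⊢
  have hN : ∑ b, ‖u b‖ * ‖u b‖ = 1 := by
    have := congrArg Complex.re hu.nrm
    simp only [Complex.re_sum, ← Complex.normSq_eq_conj_mul_self, Complex.ofReal_re,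
      Complex.one_re, Complex.normSq_eq_norm_sq] at this
    rw [← this]
    exact Finset.sum_congr rfl fun _ _ => by ring
  have hB : ∑ b, ∑ c, (∑ a, (F.N a b c : ℝ)) * ((starRingEnd ℂ) (u b) * u c).re =
      (∑ a, u a / u F.one).re := by
    have e : ∑ b, ∑ c, ((∑ a, (F.N a b c : ℝ) : ℝ) : ℂ) * ((starRingEnd ℂ) (u b) * u c) =
        ∑ a, u a / u F.one := by
      have e1 : ∀ b, ∑ c, ((∑ a, (F.N a b c : ℝ) : ℝ) : ℂ) * ((starRingEnd ℂ) (u b) * u c) =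
          (∑ a, u a / u F.one) * ((starRingEnd ℂ) (u b) * u b) := by
        intro b
        push_cast
        simp only [Finset.sum_mul]
        rw [Finset.sum_comm]
        refine Finset.sum_congr rfl fun a _ => ?_
        have := hu.eig a b
        have hne := hu.ne
        have e2 : ∑ c, (F.N a b c : ℂ) * ((starRingEnd ℂ) (u b) * u c) =
            (starRingEnd ℂ) (u b) * ∑ c, (F.N a b c : ℂ) * u c := by
          rw [Finset.mul_sum]; exact Finset.sum_congr rfl fun _ _ => by ring
        rw [e2]
        field_simp
        linear_combination (starRingEnd ℂ) (u b) * this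
      simp only [e1]
      rw [← Finset.mul_sum, hu.nrm, _root_.mul_one]
    have := congrArg Complex.re e
    simpa only [Complex.re_sum, Complex.re_ofReal_mul] using this
  have hMnn : ∀ b c, 0 ≤ ∑ a, (F.N a b c : ℝ) := fun b c =>
    Finset.sum_nonneg fun a _ => by exact_mod_cast F.N_nonneg a b c
  have hre : ∀ b c, ((starRingEnd ℂ) (u b) * u c).re ≤ ‖u b‖ * ‖u c‖ := by
    intro b c
    refine (Complex.re_le_norm _).trans ?_
    simp
  rw [hN, _root_.mul_one, ← hB] at hR
  have hterm : ∀ b c, (∑ a, (F.N a b c : ℝ)) * ((starRingEnd ℂ) (u b) * u c).re ≤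
      (∑ a, (F.N a b c : ℝ)) * (‖u b‖ * ‖u c‖) := fun b c =>
    mul_le_mul_of_nonneg_left (hre b c) (hMnn b c)
  have heq := le_antisymm (Finset.sum_le_sum fun b (_ : b ∈ Finset.univ) =>
    Finset.sum_le_sum fun c (_ : c ∈ Finset.univ) => hterm b c) hR
  have heq2 : ∀ b c, (∑ a, (F.N a b c : ℝ)) * ((starRingEnd ℂ) (u b) * u c).re =
      (∑ a, (F.N a b c : ℝ)) * (‖u b‖ * ‖u c‖) := by
    intro b c
    have h1 := (Finset.sum_eq_sum_iff_of_le (fun b _ =>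
      Finset.sum_le_sum fun c (_ : c ∈ Finset.univ) => hterm b c)).1 heq b (Finset.mem_univ _)
    exact (Finset.sum_eq_sum_iff_of_le (fun c _ => hterm b c)).1 h1 c (Finset.mem_univ _)
  have hone : (u F.one).re = ‖u F.one‖ := by
    have := hu.im
    have h2 : u F.one = ((u F.one).re : ℂ) := Complex.ext (by simp) (by simpa using this)
    rw [h2]
    simp [abs_of_pos hu.pos]
  have hnn : ∀ b, (u b).re = ‖u b‖ := by
    intro b
    have h1 := heq2 b F.one
    rw [sum_N_one, _root_.one_mul, _root_.one_mul, ← hone, Complex.mul_re, hu.im] at h1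
    simp only [Complex.conj_re, mul_zero, sub_zero] at h1
    exact mul_right_cancel₀ hu.pos.ne' h1
  have him : ∀ b, (u b).im = 0 := by
    intro b
    have h1 := Complex.sq_norm (u b)
    rw [← hnn b, Complex.normSq_apply] at h1
    nlinarith
  intro b
  refine ⟨him b, ?_⟩
  have h0 : 0 ≤ (u b).re := by rw [hnn]; exact norm_nonneg _
  rcases h0.lt_or_eq with h0 | h0
  · exact h0
  exfalso
  have hub : u b = 0 := Complex.ext h0.symm (him b)
  have h1 := hu.eig b (F.star b)
  rw [hub, zero_mul, mul_eq_zero] at h1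
  have h2 := congrArg Complex.re (h1.resolve_left hu.ne)
  have e : ∀ c, ((F.N b (F.star b) c : ℂ) * u c).re = (F.N b (F.star b) c : ℝ) * (u c).re := by
    intro c
    rw [← Complex.re_ofReal_mul]; simp
  simp only [Complex.re_sum, e, Complex.zero_re] at h2
  have h3 := (Finset.sum_eq_zero_iff_of_nonneg (fun c _ => mul_nonneg
    (by exact_mod_cast F.N_nonneg b (F.star b) c) (by rw [hnn]; exact norm_nonneg _))).1 h2
    F.one (Finset.mem_univ _)
  rw [F.N_one] at h3
  simp at h3
  exact hu.pos.ne' h3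


open Module.End in
/-- Existence of a unitary matrix whose columns are characters. -/
lemma exists_unitary (F : FusionRing Φ) :
    ∃ S : Matrix Φ Φ ℂ, S * S.conjTranspose = 1 ∧ ∀ i, IsCol F (fun a => S a i) := by
  obtain ⟨A, hA⟩ : ∃ A : Φ → Matrix Φ Φ ℂ, ∀ a b c, A a b c = (F.N a b c : ℂ) :=
    ⟨fun a => Matrix.of fun b c => (F.N a b c : ℂ), fun _ _ _ => rfl⟩
  have hAc : ∀ a b, A a * A b = A b * A a := by
    intro a b
    ext c e
    rw [Matrix.mul_apply, Matrix.mul_apply]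
    simp only [hA]
    have := F.mul_assoc a c b e
    simp only [F.mul_comm _ b] at this
    have := congrArg (fun q : ℚ => (q : ℂ)) this
    push_cast at this
    exact this
  have hAs : ∀ a, (A a).conjTranspose = A (F.star a) := by
    intro a
    ext b c
    rw [Matrix.conjTranspose_apply, hA, hA, F.N_star]
    simp
  let H : Φ → Matrix Φ Φ ℂ := fun a => (1 + I) • A a + (1 - I) • A (F.star a)
  have hH : ∀ a, (H a).IsHermitian := by
    intro a
    simp only [Matrix.IsHermitian, H, Matrix.conjTranspose_add, Matrix.conjTranspose_smul, hAs,
      F.star_involutive]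
    rw [add_comm]
    simp [← sub_eq_add_neg]
  have hHA : ∀ a, (1 + I) • H a - (1 - I) • H (F.star a) = (4 * I) • A a := by
    intro a
    simp only [H, F.star_involutive]
    ext b c
    simp only [Matrix.sub_apply, Matrix.smul_apply, Matrix.add_apply, smul_eq_mul]
    ring
  have hHc : ∀ a b, Commute (H a) (H b) := by
    intro a b
    have hc : ∀ a b, Commute (A a) (A b) := hAc
    simp only [H]
    exact (((hc _ _).smul_left _).smul_right _ |>.add_right
      (((hc _ _).smul_left _).smul_right _)).add_left
      (((hc _ _).smul_left _).smul_right _ |>.add_right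
      (((hc _ _).smul_left _).smul_right _))
  let T : Φ → EuclideanSpace ℂ Φ →ₗ[ℂ] EuclideanSpace ℂ Φ := fun a => (H a).toEuclideanLin
  have hTs : ∀ a, (T a).IsSymmetric := fun a => Matrix.isSymmetric_toEuclideanLin_iff.2 (hH a)
  have hTc : ∀ a b, Commute (T a) (T b) := by
    intro a b
    refine LinearMap.ext fun v => ?_
    have := (hHc a b).eq
    simp only [T, Module.End.mul_apply, Matrix.toLpLin_apply, Matrix.mulVec_mulVec, this]
  have htop := LinearMap.IsSymmetric.iSup_iInf_eq_top_of_commute hTs (fun a b _ => hTc a b)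
  let X : Set (EuclideanSpace ℂ Φ) := {v | IsCol F (fun a => v a)}
  have hin : ∀ v w : EuclideanSpace ℂ Φ,
      inner ℂ v w = ∑ a, (starRingEnd ℂ) (v a) * w a := by
    intro v w
    rw [PiLp.inner_apply]
    exact Finset.sum_congr rfl fun _ _ => by simp [_root_.mul_comm]
  have hon : Orthonormal ℂ (Subtype.val : X → EuclideanSpace ℂ Φ) := by
    rw [orthonormal_iff_ite]
    intro v w
    rw [hin]
    split_ifs with hvw
    · rw [hvw]; exact w.2.nrm
    · by_contra hne
      have := v.2.eq_of w.2 hne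
      exact hvw (Subtype.ext (PiLp.ext fun a => congrFun this a))
  have hsp : ⊤ ≤ Submodule.span ℂ (Set.range (Subtype.val : X → EuclideanSpace ℂ Φ)) := by
    rw [← htop, Subtype.range_coe]
    refine iSup_le fun γ v hv => ?_
    rw [Submodule.mem_iInf] at hv
    by_cases hv0 : v = 0
    · rw [hv0]; exact Submodule.zero_mem _
    have hHv : ∀ a, (H a).mulVec v = γ a • (v : Φ → ℂ) := by
      intro a
      have := mem_eigenspace_iff.1 (hv a)
      exact congrArg WithLp.ofLp this
    obtain ⟨χ, hχ⟩ : ∃ χ : Φ → ℂ, ∀ a b, ∑ c, (F.N a b c : ℂ) * v c = χ a * v b := by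
      refine ⟨fun a => ((1 + I) * γ a - (1 - I) * γ (F.star a)) / (4 * I), fun a b => ?_⟩
      have h1 := congrArg (fun M : Matrix Φ Φ ℂ => M.mulVec v b) (hHA a)
      simp only [Matrix.sub_mulVec, Matrix.smul_mulVec, hHv, Pi.sub_apply, Pi.smul_apply,
        smul_eq_mul] at h1
      have h2 : (A a).mulVec v b = ∑ c, (F.N a b c : ℂ) * v c := by
        simp [Matrix.mulVec, dotProduct, hA]
      rw [← h2]
      field_simp
      linear_combination -h1
    have hva : ∀ a, v a = χ a * v F.one := by
      intro a
      rw [← hχ a F.one]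
      have e : ∀ c, ((F.N a F.one c : ℚ) : ℂ) = if a = c then 1 else 0 := by
        intro c; rw [F.mul_one']; split_ifs <;> simp
      simp [e]
    have hv1 : v F.one ≠ 0 := by
      intro h0
      exact hv0 (PiLp.ext fun a => by rw [hva, h0]; simp)
    have hnv : ‖v‖ ≠ 0 := norm_ne_zero_iff.2 hv0
    have hn1 : ‖v F.one‖ ≠ 0 := norm_ne_zero_iff.2 hv1
    obtain ⟨k, hk⟩ : ∃ k : ℂ, k = (starRingEnd ℂ) (v F.one) / (‖v F.one‖ * ‖v‖ : ℝ) := ⟨_, rfl⟩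
    have hk1 : k * v F.one = ((‖v F.one‖ / ‖v‖ : ℝ) : ℂ) := by
      rw [hk, div_mul_eq_mul_div, ← Complex.normSq_eq_conj_mul_self, Complex.normSq_eq_norm_sq]
      rw [← Complex.ofReal_div]
      congr 1
      field_simp
    have hkn : ‖k‖ * ‖v‖ = 1 := by
      rw [hk, norm_div, RCLike.norm_conj, Complex.norm_real, norm_mul, norm_norm, norm_norm]
      field_simp
    have hk0 : k ≠ 0 := by
      intro h0; rw [h0] at hkn; simp at hkn
    have hmem : k • v ∈ X := by
      refine ⟨?_, ?_, ?_, fun a b => ?_⟩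
      · simp only [PiLp.smul_apply, smul_eq_mul, hk1, Complex.ofReal_im]
      · simp only [PiLp.smul_apply, smul_eq_mul, hk1, Complex.ofReal_re]
        positivity
      · rw [← hin, inner_self_eq_norm_sq_to_K, norm_smul, hkn]
        simp
      · simp only [PiLp.smul_apply, smul_eq_mul]
        have e : ∑ c, (F.N a b c : ℂ) * (k * v c) = k * (χ a * v b) := by
          rw [← hχ, Finset.mul_sum]
          exact Finset.sum_congr rfl fun _ _ => by ring
        rw [e, hva a]
        ring
    have := Submodule.smul_mem _ k⁻¹ (Submodule.subset_span (R := ℂ) hmem)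
    rwa [inv_smul_smul₀ hk0] at this
  have : Finite X := hon.linearIndependent.finite
  have : Fintype X := Fintype.ofFinite X
  let B := OrthonormalBasis.mk hon hsp
  have hcard : Fintype.card X = Fintype.card Φ := by
    rw [← Module.finrank_eq_card_basis B.toBasis, finrank_euclideanSpace]
  let e : Φ ≃ X := Fintype.equivOfCardEq hcard.symm
  refine ⟨Matrix.of fun a i => (e i).1 a, ?_, fun i => (e i).2⟩
  apply mul_eq_one_comm.1
  ext i j
  have h1 := orthonormal_iff_ite.1 hon (e i) (e j)
  rw [hin] at h1
  simp only [e.injective.eq_iff] at h1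
  rw [Matrix.mul_apply, Matrix.one_apply, ← h1]
  rfl

lemma exists_S (F : FusionRing Φ) : ∃ S : Matrix Φ Φ ℂ, IsCanonicalS F S := by
  obtain ⟨S, hU, hc⟩ := exists_unitary F
  obtain ⟨i₀, hi₀⟩ := exists_pos_col hU hc
  obtain ⟨S', hS'⟩ : ∃ S' : Matrix Φ Φ ℂ, ∀ a i, S' a i = S a (Equiv.swap F.one i₀ i) :=
    ⟨Matrix.of fun a i => S a (Equiv.swap F.one i₀ i), fun _ _ => rfl⟩
  have hU' : S' * S'.conjTranspose = 1 := by
    ext a b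
    rw [Matrix.mul_apply, Matrix.one_apply, ← unit_row hU a b,
      ← Equiv.sum_comp (Equiv.swap F.one i₀)]
    simp [Matrix.conjTranspose_apply, hS']
  have hc' : ∀ i, IsCol F (fun a => S' a i) := by
    intro i
    simp only [hS']
    exact hc _
  refine ⟨S', hU', fun i => ⟨(hc' i).im, (hc' i).pos⟩, fun a => ?_, verlinde_of hU' hc'⟩
  rw [hS', Equiv.swap_apply_left]
  exact hi₀ a

end Helpers

/-- Every fusion ring admits a canonical unitary matrix `S` with positive
`one`-row and `one`-column satisfying Verlinde's formula; `S` is unique up to a permutation of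
its columns; and the fusion ring is self-dual (its dual structure constants
`N̂ i j k = ∑_a S a i · S a j · conj (S a k) / S a one` agree with `N` under some bijection)
if and only if there are bijections `ι, ι'` of `Φ` with `S a (ι' b) = S b (ι a)` for all `a, b`. -/
theorem fusionRing_canonical_S_and_selfdual_iff
    {Φ : Type} [Fintype Φ] [DecidableEq Φ] (F : FusionRing Φ) :
    ∃ S : Matrix Φ Φ ℂ, IsCanonicalS F S ∧
      (∀ S' : Matrix Φ Φ ℂ, IsCanonicalS F S' →
        ∃ σ : Equiv.Perm Φ, ∀ a i, S' a i = S a (σ i)) ∧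
      ((∃ ι : Equiv.Perm Φ, ∀ a b c, (F.N a b c : ℂ) =
          ∑ x, S x (ι a) * S x (ι b) * (starRingEnd ℂ) (S x (ι c)) / S x F.one) ↔
        (∃ ι ι' : Equiv.Perm Φ, ∀ a b, S a (ι' b) = S b (ι a))) := by
  obtain ⟨S, hS⟩ := exists_S F
  exact ⟨S, hS, fun S' hS' => unique_S hS hS', selfdual_iff hS⟩
end

section
/- Let R be a fusion ring on basis Φ (with |Φ| = n) whose associated ℚ-algebra is isomorphic to a field. Then there exist: a number field 𝕃 ⊆ ℂ that is normal over ℚ and stable under complex conjugation, with complex conjugation commuting with every field embedding of 𝕃 into ℂ; a totally positive element α ∈ 𝕃 with Tr_{𝕃/ℚ}(|α|²) = 1; a subfield K ⊆ 𝕃 with [K:ℚ] = n; and a ℚ-algebra isomorphism θ from R onto K with θ(1) = 1 and θ(a*) = conj(θ(a)) for all a ∈ Φ, such that Tr_{𝕃/ℚ}(|α|² θ(a) conj(θ(b))) = δ_{a,b} for all a, b ∈ Φ. In particular the structure constants are realised by multiplication in K: N_{ab}^c = Tr_{𝕃/ℚ}(|α|² θ(a) θ(b) conj(θ(c))) for all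 a, b, c ∈ Φ. -/
open scoped BigOperators
open Complex

/-- The product on the associated `ℚ`-algebra (the free `ℚ`-vector space on `Φ`, realised as
`Φ → ℚ`) of a fusion ring. -/
def fusionMul {Φ : Type} [Fintype Φ] [DecidableEq Φ] (F : FusionRing Φ) (x y : Φ → ℚ) :
    Φ → ℚ :=
  fun c => ∑ a, ∑ b, x a * y b * F.N a b c


lemma FR_rot {Φ : Type} [Fintype Φ] [DecidableEq Φ] (F : FusionRing Φ) (a b c : Φ) :
    F.N a b c = F.N (F.star a) c b := by
  have h1 : ∀ a b c : Φ, F.N a b (F.star c) = F.N b c (F.star a) := by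
    intro a b c
    have h := F.mul_assoc a b c F.one
    simp only [F.N_one] at h
    have e1 : ∀ d, (c = F.star d) ↔ (d = F.star c) := by
      intro d
      constructor
      · rintro rfl; rw [F.star_involutive]
      · rintro rfl; rw [F.star_involutive]
    simp only [e1] at h
    simpa using h
  have h2 := h1 b a (F.star c)
  rw [F.star_involutive] at h2
  rw [F.mul_comm a b c, h2, ← F.star_hom, F.star_involutive, F.star_involutive]

lemma FR_char_star {Φ : Type} [Fintype Φ] [DecidableEq Φ] (F : FusionRing Φ) (χ : Φ → ℂ)
    (h1 : χ F.one = 1) (hm : ∀ a b, χ a * χ b = ∑ c, (F.N a b c : ℂ) * χ c) (a : Φ) :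
    χ (F.star a) = (starRingEnd ℂ) (χ a) := by
  set S : ℂ := ∑ b, χ b * (starRingEnd ℂ) (χ b) with hS
  have hSr : S = ((∑ b, Complex.normSq (χ b) : ℝ) : ℂ) := by
    rw [hS]; push_cast
    exact Finset.sum_congr rfl fun b _ => Complex.mul_conj _
  have hS0 : S ≠ 0 := by
    rw [hSr]
    have : 0 < ∑ b, Complex.normSq (χ b) := by
      apply Finset.sum_pos' (fun _ _ => Complex.normSq_nonneg _)
      exact ⟨F.one, Finset.mem_univ _, by simp [h1]⟩
    exact_mod_cast this.ne'
  have key : χ a * S = (starRingEnd ℂ) (χ (F.star a)) * S := by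
    calc χ a * S = ∑ b, (χ a * χ b) * (starRingEnd ℂ) (χ b) := by
          rw [hS, Finset.mul_sum]; exact Finset.sum_congr rfl fun b _ => by ring
      _ = ∑ b, ∑ c, (F.N a b c : ℂ) * χ c * (starRingEnd ℂ) (χ b) := by
          refine Finset.sum_congr rfl fun b _ => ?_
          rw [hm, Finset.sum_mul]
      _ = ∑ c, ∑ b, (F.N a b c : ℂ) * χ c * (starRingEnd ℂ) (χ b) := Finset.sum_comm
      _ = ∑ c, χ c * (starRingEnd ℂ) (χ (F.star a) * χ c) := by
          refine Finset.sum_congr rfl fun c _ => ?_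
          rw [hm, map_sum, Finset.mul_sum]
          refine Finset.sum_congr rfl fun b _ => ?_
          rw [map_mul, FR_rot F a b c]
          simp
          ring
      _ = _ := by
          rw [hS, Finset.mul_sum]
          refine Finset.sum_congr rfl fun c _ => ?_
          rw [map_mul]; ring
  have := mul_right_cancel₀ hS0 key
  rw [this]; simp

lemma FR_trace {Φ : Type} [Fintype Φ] [DecidableEq Φ] (F : FusionRing Φ)
    {K : Type} [Field K] [Algebra ℚ K] (t : Module.Basis Φ ℚ K)
    (hm : ∀ a b, t a * t b = ∑ c, F.N a b c • t c)
    (hD : (∑ a, t a * t (F.star a)) ≠ 0) (a b c : Φ) :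
    Algebra.trace ℚ K (t a * t b * t (F.star c) * (∑ a, t a * t (F.star a))⁻¹) = F.N a b c := by
  set D := ∑ a, t a * t (F.star a) with hDdef
  have hr0 : ∀ a b c, t.repr (t a * t b) c = F.N a b c := by
    intro a b c
    rw [hm]; simp [Finsupp.single_apply]
  have hr : ∀ (x : K) a, t.repr x a = t.repr (x * t (F.star a)) F.one := by
    intro x a
    have : (t.coord a) = (t.coord F.one) ∘ₗ (LinearMap.mulRight ℚ (t (F.star a))) := by
      apply t.ext
      intro b
      simp only [Module.Basis.coord_apply, LinearMap.comp_apply, LinearMap.mulRight_apply, hr0,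
        F.N_one, Module.Basis.repr_self, Finsupp.single_apply]
      congr 1
      apply propext
      constructor
      · rintro rfl; rfl
      · intro h
        rw [← F.star_involutive a, h, F.star_involutive]
    exact congrArg (fun f => f x) this
  have htr : ∀ x : K, Algebra.trace ℚ K x = t.repr (x * D) F.one := by
    intro x
    rw [Algebra.trace_eq_matrix_trace t, Matrix.trace]
    simp only [Matrix.diag_apply, Algebra.leftMulMatrix_eq_repr_mul]
    rw [hDdef, Finset.mul_sum, map_sum, Finsupp.finsetSum_apply]
    refine Finset.sum_congr rfl fun a _ => ?_
    rw [hr]; congr 2; ring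
  rw [htr, inv_mul_cancel_right₀ hD, ← hr, hr0]

lemma FR_field {Φ : Type} [Fintype Φ] [DecidableEq Φ] (F : FusionRing Φ)
    (hfield : ∃ (K₀ : Type) (instK₀ : Field K₀) (e : (Φ → ℚ) ≃ K₀),
      (∀ x y, e (x + y) = @HAdd.hAdd K₀ K₀ K₀ ⟨instK₀.add⟩ (e x) (e y)) ∧
      (∀ x y, e (fusionMul F x y) = @HMul.hMul K₀ K₀ K₀ ⟨instK₀.mul⟩ (e x) (e y))) :
    ∃ (K : Type) (_ : Field K) (_ : Algebra ℚ K) (t : Module.Basis Φ ℚ K), t F.one = 1 ∧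
      (∀ a b, t a * t b = ∑ c, F.N a b c • t c) := by
  obtain ⟨K, inst, e, hadd, hmul⟩ := hfield
  let e' : (Φ → ℚ) ≃+ K := { e with map_add' := hadd }
  have hmul' : ∀ x y, e' (fusionMul F x y) = e' x * e' y := hmul
  have : CharZero K := by
    refine ⟨?_⟩
    have inj : ∀ n : ℕ, (n : K) = 0 → n = 0 := by
      intro n hn
      by_contra h
      have h2 : e' (n • Pi.single F.one 1) = 0 := by
        rw [map_nsmul, nsmul_eq_mul, hn, zero_mul]
      have h3 := (map_eq_zero_iff e' e'.injective).1 h2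
      have h4 := congrFun h3 F.one
      simp at h4
      exact h h4
    intro m n hmn
    rcases le_total m n with h | h
    · have := inj (n - m) (by rw [Nat.cast_sub h]; simp [hmn])
      omega
    · have := inj (m - n) (by rw [Nat.cast_sub h]; simp [hmn])
      omega
  let l : (Φ → ℚ) ≃ₗ[ℚ] K := { e' with map_smul' := fun q x => map_rat_smul e' q x }
  have hl : ∀ x, l x = e' x := fun _ => rfl
  let t : Module.Basis Φ ℚ K := (Pi.basisFun ℚ Φ).map l
  have ht : ∀ a, t a = l (Pi.single a 1) := by intro a; simp [t]
  have hm : ∀ a b, t a * t b = ∑ c, F.N a b c • t c := by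
    intro a b
    simp only [ht, ← map_smul, ← map_sum]
    rw [hl, hl, hl, ← hmul']
    congr 1
    ext c
    simp [fusionMul, Pi.single_apply]
  refine ⟨K, inst, inferInstance, t, ?_, hm⟩
  have h := hm F.one F.one
  simp only [F.one_mul] at h
  simp at h
  exact mul_right_cancel₀ (t.ne_zero F.one) (h.trans (_root_.one_mul _).symm)

/-- Newton iteration for the square root. -/
noncomputable def newtonSeq {K : Type*} [Field K] (D : K) : ℕ → K
  | 0 => 1
  | k + 1 => (newtonSeq D k + D / newtonSeq D k) / 2

lemma newtonSeq_map {K K' : Type*} [Field K] [Field K'] (f : K →+* K') (D : K) (k : ℕ) :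
    f (newtonSeq D k) = newtonSeq (f D) k := by
  induction k with
  | zero => simp [newtonSeq]
  | succ k ih => simp [newtonSeq, ih, map_ofNat]

lemma newtonSeq_pos (d : ℝ) (hd : 0 < d) (k : ℕ) : 0 < newtonSeq d k := by
  induction k with
  | zero => simp [newtonSeq]
  | succ k ih => simp only [newtonSeq]; positivity

lemma newtonSeq_sub (d : ℝ) (hd : 0 < d) (k : ℕ) :
    newtonSeq d (k + 1) ^ 2 - d = (newtonSeq d k ^ 2 - d) ^ 2 / (4 * newtonSeq d k ^ 2) := by
  have := newtonSeq_pos d hd k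
  simp only [newtonSeq]
  field_simp
  ring

lemma newtonSeq_ge (d : ℝ) (hd : 0 < d) (k : ℕ) : d ≤ newtonSeq d (k + 1) ^ 2 := by
  have h := newtonSeq_sub d hd k
  have : 0 ≤ (newtonSeq d k ^ 2 - d) ^ 2 / (4 * newtonSeq d k ^ 2) := by positivity
  linarith

lemma newtonSeq_le (d : ℝ) (hd : 0 < d) (k : ℕ) :
    newtonSeq d (k + 1) ^ 2 - d ≤ (newtonSeq d 1 ^ 2 - d) * (1 / 4) ^ k := by
  induction k with
  | zero => simp
  | succ k ih =>
    have h := newtonSeq_sub d hd (k + 1)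
    have h0 := newtonSeq_ge d hd k
    have hp := newtonSeq_pos d hd (k + 1)
    have h2 : newtonSeq d (k + 1 + 1) ^ 2 - d ≤ (newtonSeq d (k + 1) ^ 2 - d) * (1 / 4) := by
      rw [h, div_le_iff₀ (by positivity)]
      nlinarith
    rw [pow_succ (1 / 4 : ℝ)]
    nlinarith

lemma newtonSeq_eventually (d : ℝ) (hd : 0 < d) :
    ∀ᶠ k in Filter.atTop, newtonSeq d (k + 1) ^ 2 < 65 / 64 * d := by
  have h1 : Filter.Tendsto (fun k : ℕ => (newtonSeq d 1 ^ 2 - d) * (1 / 4 : ℝ) ^ k) Filter.atTop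
      (nhds ((newtonSeq d 1 ^ 2 - d) * 0)) :=
    (tendsto_pow_atTop_nhds_zero_of_lt_one (by norm_num) (by norm_num)).const_mul _
  rw [mul_zero] at h1
  have h2 := h1.eventually (gt_mem_nhds (show (0:ℝ) < d / 64 by positivity))
  filter_upwards [h2] with k hk
  have := newtonSeq_le d hd k
  linarith

lemma exists_approx_sqrt {K : Type} [Field K] [Algebra ℚ K] [FiniteDimensional ℚ K] (D : K)
    (hD : ∀ g : K →ₐ[ℚ] ℂ, ∃ d : ℝ, g D = d ∧ 0 < d) :
    ∃ c : K, ∀ g : K →ₐ[ℚ] ℂ, ∃ d s : ℝ, g D = d ∧ g c = s ∧ 0 < d ∧ 0 < s ∧ d ≤ s ^ 2 ∧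
      s ^ 2 < 65 / 64 * d := by
  choose d hd hd0 using hD
  have : ∀ᶠ k in Filter.atTop, ∀ g : K →ₐ[ℚ] ℂ, newtonSeq (d g) (k + 1) ^ 2 < 65 / 64 * d g := by
    rw [Filter.eventually_all]
    exact fun g => newtonSeq_eventually (d g) (hd0 g)
  obtain ⟨k, hk⟩ := this.exists
  refine ⟨newtonSeq D (k + 1), fun g => ⟨d g, newtonSeq (d g) (k + 1), hd g, ?_, hd0 g,
    newtonSeq_pos _ (hd0 g) _, newtonSeq_ge _ (hd0 g) _, hk g⟩⟩
  have h1 := newtonSeq_map (g : K →+* ℂ) D (k + 1)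
  have h2 := newtonSeq_map Complex.ofRealHom (d g) (k + 1)
  simp only [RingHom.coe_coe, Complex.ofRealHom_eq_coe] at h1 h2
  rw [h1, h2, hd]

lemma rat_four_squares (r : ℚ) (hr : 0 ≤ r) : ∃ b : Fin 4 → ℚ, ∑ i, b i ^ 2 = r := by
  obtain ⟨a, b, c, d, h⟩ := Nat.sum_four_squares (r.num.toNat * r.den)
  refine ⟨![a / r.den, b / r.den, c / r.den, d / r.den], ?_⟩
  simp only [Fin.sum_univ_four, Matrix.cons_val_zero, Matrix.cons_val_one, Matrix.cons_val]
  have hn : ((r.num.toNat : ℕ) : ℚ) = r.num := by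
    exact_mod_cast Int.toNat_of_nonneg (Rat.num_nonneg.2 hr)
  have h' : (a : ℚ) ^ 2 + b ^ 2 + c ^ 2 + d ^ 2 = r.num * r.den := by
    rw [← hn]; exact_mod_cast h
  have hden : (r.den : ℚ) ≠ 0 := by exact_mod_cast r.den_ne_zero
  have hr' : r = r.num / r.den := (Rat.num_div_den r).symm
  have e : ((a : ℚ) / r.den) ^ 2 + (b / r.den) ^ 2 + (c / r.den) ^ 2 + (d / r.den) ^ 2 =
      (r.num * r.den) / (r.den) ^ 2 := by
    rw [← h']; ring
  rw [e, pow_two, mul_div_mul_right _ _ hden]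
  exact hr'.symm

lemma exists_coeffs (R : ℚ) (hR : 0 < R) : ∃ (a : ℚ) (b b' : Fin 4 → ℚ), 0 < a ∧
    a ^ 2 + 2 * ∑ i, b i ^ 2 = R ∧ 2 * ∑ i, b' i ^ 2 = R ∧
    2 * ∑ i, |b i| + 1 / 8 * (2 * ∑ i, |b' i|) < a := by
  have hR' : (0 : ℝ) < R := by exact_mod_cast hR
  have hlt : √(32 / 33 * (R : ℝ)) < √(R : ℝ) := by
    apply Real.sqrt_lt_sqrt (by positivity); linarith
  obtain ⟨a, h1, h2⟩ := exists_rat_btwn hlt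
  have ha : (0 : ℝ) < a := lt_of_le_of_lt (Real.sqrt_nonneg _) h1
  have h1' : 32 / 33 * (R : ℝ) < a ^ 2 := by rwa [← Real.sqrt_lt' ha]
  have h2' : (a : ℝ) ^ 2 < R := by rwa [← Real.lt_sqrt ha.le]
  have ha : 0 < a := by exact_mod_cast ha
  have h1 : 32 / 33 * R < a ^ 2 := by
    have : ((32 / 33 * R : ℚ) : ℝ) < ((a ^ 2 : ℚ) : ℝ) := by push_cast; exact h1'
    exact_mod_cast this
  have h2 : a ^ 2 < R := by exact_mod_cast h2'
  obtain ⟨b, hb⟩ := rat_four_squares ((R - a ^ 2) / 2) (by linarith)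
  obtain ⟨b', hb'⟩ := rat_four_squares (R / 2) (by linarith)
  refine ⟨a, b, b', ha, by rw [hb]; ring, by rw [hb']; ring, ?_⟩
  have cs : ∀ f : Fin 4 → ℚ, (∑ i, |f i|) ^ 2 ≤ 4 * ∑ i, f i ^ 2 := by
    intro f
    have := sq_sum_le_card_mul_sum_sq (s := (Finset.univ : Finset (Fin 4))) (f := fun i => |f i|)
    simpa using this
  have c1 := cs b
  have c2 := cs b'
  rw [hb] at c1
  rw [hb'] at c2
  have e1 : 2 * ∑ i, |b i| < a / 2 := by
    apply lt_of_pow_lt_pow_left₀ 2 (by positivity)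
    nlinarith
  have e2 : 1 / 8 * (2 * ∑ i, |b' i|) < a / 2 := by
    apply lt_of_pow_lt_pow_left₀ 2 (by positivity)
    nlinarith
  linarith

lemma dvd_finrank_of_primitive {E : Type} [Field E] [Algebra ℚ E] [FiniteDimensional ℚ E]
    (p : ℕ) (hp : p.Prime) (z : E) (hz : IsPrimitiveRoot z (p ^ 2)) : p ∣ Module.finrank ℚ E := by
  have hpos : 0 < p ^ 2 := pow_pos hp.pos 2
  have : NeZero ((p ^ 2 : ℕ) : ℚ) := ⟨by exact_mod_cast hpos.ne'⟩
  have h3 := minpoly.degree_dvd (K := ℚ) (IsIntegral.of_finite ℚ z)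
  rw [← hz.minpoly_eq_cyclotomic_of_irreducible (Polynomial.cyclotomic.irreducible_rat hpos),
    Polynomial.natDegree_cyclotomic, Nat.totient_prime_pow hp (by norm_num)] at h3
  refine dvd_trans ?_ h3
  simp

open IntermediateField in
lemma exists_twist {L : Type} [Field L] [Algebra ℚ L] [FiniteDimensional ℚ L] [Normal ℚ L]
    (M : IntermediateField ℚ L) (p : ℕ) (hp : p.Prime) (hpM : Module.finrank ℚ M < p) (ζ : L)
    (hζ : IsPrimitiveRoot ζ (p ^ 2)) :
    ∃ τ : L ≃ₐ[ℚ] L, (∀ m ∈ M, τ m = m) ∧ τ ζ = ζ * ζ ^ p ∧ τ (ζ ^ p) = ζ ^ p := by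
  have : CharZero L := algebraRat.charZero L
  have hω : IsPrimitiveRoot (ζ ^ p) p := hζ.pow (by have := hp.pos; positivity) (by ring)
  let M1 : IntermediateField M L := M⟮ζ ^ p⟯
  have hωM1 : ζ ^ p ∈ M1 := mem_adjoin_simple_self M (ζ ^ p)
  have hd1 : Module.finrank M M1 < p := by
    rw [adjoin.finrank (IsIntegral.of_finite M _)]
    have hdvd : minpoly M (ζ ^ p) ∣ Polynomial.cyclotomic p M := by
      apply minpoly.dvd
      rw [Polynomial.aeval_def, ← Polynomial.eval_map, Polynomial.map_cyclotomic]
      exact hω.isRoot_cyclotomic hp.pos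
    have := Polynomial.natDegree_le_of_dvd hdvd (Polynomial.cyclotomic_ne_zero p M)
    rw [Polynomial.natDegree_cyclotomic, Nat.totient_prime hp] at this
    have := hp.pos
    omega
  have hd2' : ¬ p ∣ Module.finrank ℚ M1 := by
    rw [← Module.finrank_mul_finrank ℚ M M1, hp.dvd_mul]
    rintro (h | h)
    · exact absurd (Nat.le_of_dvd Module.finrank_pos h) (by omega)
    · exact absurd (Nat.le_of_dvd Module.finrank_pos h) (by omega)
  let M' : IntermediateField ℚ L := M1.restrictScalars ℚ
  have hd2 : ¬ p ∣ Module.finrank ℚ M' := hd2'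
  let ω : M' := ⟨ζ ^ p, hωM1⟩
  have hint : IsIntegral M' ζ := IsIntegral.of_finite M' _
  have hmon : (Polynomial.X ^ p - Polynomial.C ω).Monic :=
    Polynomial.monic_X_pow_sub_C ω hp.ne_zero
  have hdvd : minpoly M' ζ ∣ Polynomial.X ^ p - Polynomial.C ω := by
    apply minpoly.dvd
    simp only [map_sub, map_pow, Polynomial.aeval_X, Polynomial.aeval_C]
    exact sub_self _
  have hle : (minpoly M' ζ).natDegree ≤ p := by
    have := Polynomial.natDegree_le_of_dvd hdvd hmon.ne_zero
    rwa [Polynomial.natDegree_X_pow_sub_C] at this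
  have hpd : p ∣ (minpoly M' ζ).natDegree := by
    rw [← adjoin.finrank hint]
    have h1 : p ∣ Module.finrank ℚ M'⟮ζ⟯ := by
      have hz : IsPrimitiveRoot (AdjoinSimple.gen M' ζ) (p ^ 2) := by
        apply IsPrimitiveRoot.of_map_of_injective (f := algebraMap M'⟮ζ⟯ L) _
          (algebraMap M'⟮ζ⟯ L).injective
        rw [AdjoinSimple.algebraMap_gen]; exact hζ
      have : FiniteDimensional ℚ M'⟮ζ⟯ := FiniteDimensional.trans ℚ M' _
      exact @dvd_finrank_of_primitive M'⟮ζ⟯ _ (IntermediateField.algebra' _) this p hp _ hz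
    rw [← Module.finrank_mul_finrank ℚ M' M'⟮ζ⟯, hp.dvd_mul] at h1
    exact h1.resolve_left hd2
  have hmin : Polynomial.X ^ p - Polynomial.C ω = minpoly M' ζ := by
    apply Polynomial.eq_of_monic_of_dvd_of_natDegree_le (minpoly.monic hint) hmon hdvd
    rw [Polynomial.natDegree_X_pow_sub_C]
    exact Nat.le_of_dvd (minpoly.natDegree_pos hint) hpd
  have hN : Normal M' L := Normal.tower_top_of_normal ℚ M' L
  have hconj : IsConjRoot M' (ζ * ζ ^ p) ζ := by
    apply IsConjRoot.symm
    rw [isConjRoot_iff_aeval_eq_zero hint, ← hmin]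
    simp only [map_sub, map_pow, Polynomial.aeval_X, Polynomial.aeval_C, mul_pow]
    rw [← pow_mul, ← pow_two, hζ.pow_eq_one, mul_one]
    exact sub_self _
  obtain ⟨τ, hτ⟩ := isConjRoot_iff_exists_algEquiv.1 hconj
  refine ⟨τ.restrictScalars ℚ, ?_, hτ, ?_⟩
  · intro m hm
    exact τ.commutes (⟨m, M1.algebraMap_mem ⟨m, hm⟩⟩ : M')
  · exact τ.commutes ω

lemma trace_zeta_eq_zero {L : Type} [Field L] [Algebra ℚ L] [FiniteDimensional ℚ L] [Normal ℚ L]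
    (M : IntermediateField ℚ L) (p : ℕ) (hp : p.Prime) (hpM : Module.finrank ℚ M < p) (ζ : L)
    (hζ : IsPrimitiveRoot ζ (p ^ 2)) (m : L) (hm : m ∈ M) (j : ℤ) (hj : ¬ (p : ℤ) ∣ j) :
    Algebra.trace ℚ L (m * ζ ^ j) = 0 := by
  obtain ⟨τ, h1, h2, h3⟩ := exists_twist M p hp hpM ζ hζ
  have hω : IsPrimitiveRoot (ζ ^ p) p := hζ.pow (by have := hp.pos; positivity) (by ring)
  have hk : ∀ k : ℕ, Algebra.trace ℚ L (m * ζ ^ j * ((ζ ^ p) ^ j) ^ k) =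
      Algebra.trace ℚ L (m * ζ ^ j) := by
    intro k
    induction k with
    | zero => simp
    | succ k ih =>
      rw [← ih, ← Algebra.trace_eq_of_algEquiv τ (m * ζ ^ j * ((ζ ^ p) ^ j) ^ k)]
      congr 1
      rw [map_mul, map_mul, map_pow, map_zpow₀, map_zpow₀, h1 m hm, h2, h3, mul_zpow]
      ring
  have hne : (ζ ^ p) ^ j ≠ 1 := fun h => hj ((hω.zpow_eq_one_iff_dvd j).1 h)
  have hsum : ∑ k ∈ Finset.range p, ((ζ ^ p) ^ j) ^ k = 0 := by
    rw [geom_sum_eq hne, ← zpow_natCast, zpow_comm, zpow_natCast, hω.pow_eq_one]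
    simp
  have h4 : ∑ k ∈ Finset.range p, Algebra.trace ℚ L (m * ζ ^ j * ((ζ ^ p) ^ j) ^ k) = 0 := by
    rw [← map_sum, ← Finset.mul_sum, hsum, mul_zero, map_zero]
  simp only [hk, Finset.sum_const, Finset.card_range, nsmul_eq_mul] at h4
  have hp0 : (p : ℚ) ≠ 0 := by exact_mod_cast hp.ne_zero
  exact (mul_eq_zero.1 h4).resolve_left hp0

lemma trace_sq {L : Type} [Field L] [Algebra ℚ L] [FiniteDimensional ℚ L] [Normal ℚ L]
    (M : IntermediateField ℚ L) (p : ℕ) (hp : p.Prime) (hp16 : 16 < p)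
    (hpM : Module.finrank ℚ M < p) (ζ : L)
    (hζ : IsPrimitiveRoot ζ (p ^ 2)) (m : L) (hm : m ∈ M) (m0 : L) (hm0 : m0 ∈ M)
    (c : Fin 8 → L) (hc : ∀ i, c i ∈ M) :
    Algebra.trace ℚ L (m * (m0 + ∑ i : Fin 8, c i *
      (ζ ^ ((i : ℤ) + 1) + ζ ^ (-((i : ℤ) + 1)))) ^ 2) =
    Algebra.trace ℚ L (m * (m0 ^ 2 + 2 * ∑ i, c i ^ 2)) := by
  have hζ0 : ζ ≠ 0 := hζ.ne_zero (by have := hp.pos; positivity)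
  have tz := trace_zeta_eq_zero M p hp hpM ζ hζ
  have hnd : ∀ j : ℤ, j ≠ 0 → |j| ≤ 16 → ¬ (p : ℤ) ∣ j := by
    intro j hj hj' h
    have := Int.le_of_dvd (abs_pos.2 hj) ((dvd_abs _ _).2 h)
    omega
  set w : Fin 8 → L := fun i => ζ ^ ((i : ℤ) + 1) + ζ ^ (-((i : ℤ) + 1)) with hw
  have t1 : ∀ x ∈ M, ∀ i, Algebra.trace ℚ L (x * w i) = 0 := by
    intro x hx i
    have hi := i.2
    rw [hw, mul_add, map_add, tz x hx _ (hnd _ (by omega) (by rw [abs_le]; omega)),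
      tz x hx _ (hnd _ (by omega) (by rw [abs_le]; omega)), add_zero]
  have t2 : ∀ x ∈ M, ∀ i j, Algebra.trace ℚ L (x * (w i * w j)) =
      if i = j then Algebra.trace ℚ L (2 * x) else 0 := by
    intro x hx i j
    have hi := i.2
    have hj := j.2
    have e : x * (w i * w j) = x * ζ ^ ((i : ℤ) + j + 2) + x * ζ ^ (-((i : ℤ) + j + 2)) +
        (x * ζ ^ ((i : ℤ) - j) + x * ζ ^ ((j : ℤ) - i)) := by
      have a1 : ζ ^ ((i : ℤ) + j + 2) = ζ ^ ((i : ℤ) + 1) * ζ ^ ((j : ℤ) + 1) := by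
        rw [← zpow_add₀ hζ0]; congr 1; ring
      have a2 : ζ ^ (-((i : ℤ) + j + 2)) = ζ ^ (-((i : ℤ) + 1)) * ζ ^ (-((j : ℤ) + 1)) := by
        rw [← zpow_add₀ hζ0]; exact congrArg _ (by ring)
      have a3 : ζ ^ ((i : ℤ) - j) = ζ ^ ((i : ℤ) + 1) * ζ ^ (-((j : ℤ) + 1)) := by
        rw [← zpow_add₀ hζ0]; congr 1; ring
      have a4 : ζ ^ ((j : ℤ) - i) = ζ ^ (-((i : ℤ) + 1)) * ζ ^ ((j : ℤ) + 1) := by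
        rw [← zpow_add₀ hζ0]; congr 1; ring
      rw [a1, a2, a3, a4]
      simp only [hw]
      ring
    rw [e, map_add, map_add, tz x hx _ (hnd _ (by omega) (by rw [abs_le]; omega)),
      tz x hx _ (hnd _ (by omega) (by rw [abs_le]; omega))]
    split_ifs with hij
    · subst hij; simp [two_mul]
    · have hij' : (i : ℕ) ≠ j := fun h => hij (Fin.ext h)
      rw [map_add, tz x hx _ (hnd _ (by omega) (by rw [abs_le]; omega)),
        tz x hx _ (hnd _ (by omega) (by rw [abs_le]; omega))]
      simp
  have e : m * (m0 + ∑ i, c i * w i) ^ 2 = m * m0 ^ 2 + ∑ i, (2 * m * m0 * c i) * w i +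
      ∑ i, ∑ j, (m * c i * c j) * (w i * w j) := by
    have e1 : ∑ i, (2 * m * m0 * c i) * w i = 2 * m * m0 * ∑ i, c i * w i := by
      rw [Finset.mul_sum]; exact Finset.sum_congr rfl fun i _ => by ring
    have e2 : ∑ i, ∑ j, (m * c i * c j) * (w i * w j) =
        m * ((∑ i, c i * w i) * ∑ j, c j * w j) := by
      rw [Finset.sum_mul_sum, Finset.mul_sum]
      refine Finset.sum_congr rfl fun i _ => ?_
      rw [Finset.mul_sum]
      exact Finset.sum_congr rfl fun j _ => by ring
    rw [e1, e2]; ring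
  have two_mem : (2 : L) ∈ M := by
    simp
  rw [e, map_add, map_add, map_sum, map_sum]
  rw [Finset.sum_eq_zero fun i _ => t1 _ (M.mul_mem (M.mul_mem (M.mul_mem two_mem hm) hm0) (hc i)) i]
  simp only [map_sum]
  simp only [t2 _ (M.mul_mem (M.mul_mem hm (hc _)) (hc _))]
  simp only [Finset.sum_ite_eq, Finset.mem_univ, if_true]
  rw [mul_add, map_add, add_zero, ← map_sum, Finset.mul_sum, Finset.mul_sum]
  congr 2
  exact Finset.sum_congr rfl fun i _ => by ring

lemma trace_hom {K L : Type} [Field K] [Field L] [Algebra ℚ K] [Algebra ℚ L]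
    [FiniteDimensional ℚ K] [FiniteDimensional ℚ L] (φ : K →ₐ[ℚ] L) :
    ∃ n : ℕ, 0 < n ∧ ∀ x, Algebra.trace ℚ L (φ x) = n * Algebra.trace ℚ K x := by
  letI : Algebra K L := φ.toRingHom.toAlgebra
  haveI : IsScalarTower ℚ K L := IsScalarTower.of_algebraMap_eq fun x => (φ.commutes x).symm
  haveI : FiniteDimensional K L := FiniteDimensional.right ℚ K L
  refine ⟨Module.finrank K L, Module.finrank_pos, fun x => ?_⟩
  rw [← Algebra.trace_trace (S := K)]
  have : φ x = algebraMap K L x := rfl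
  rw [this, Algebra.trace_algebraMap, map_nsmul, nsmul_eq_mul]

lemma exists_normal_field (S : Finset ℂ) (hS : ∀ x ∈ S, IsIntegral ℚ x) :
    ∃ L : IntermediateField ℚ ℂ, FiniteDimensional ℚ L ∧ Normal ℚ L ∧ (∀ x ∈ S, x ∈ L) ∧
      ∃ σ : L ≃ₐ[ℚ] L, (∀ x : L, (σ x : ℂ) = (starRingEnd ℂ) (x : ℂ)) ∧
      ((∀ x : L, (x : ℂ) ∈ S → ∀ g : L →ₐ[ℚ] ℂ, g (σ x) = (starRingEnd ℂ) (g x)) →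
        ∀ (g : L →ₐ[ℚ] ℂ) (x : L), g (σ x) = (starRingEnd ℂ) (g x)) := by
  set P : Polynomial ℚ := ∏ x ∈ S, minpoly ℚ x with hP
  have hP0 : P ≠ 0 := Finset.prod_ne_zero_iff.2 fun x hx => minpoly.ne_zero (hS x hx)
  let L : IntermediateField ℚ ℂ := IntermediateField.adjoin ℚ (P.rootSet ℂ)
  have hsp : Polynomial.IsSplittingField ℚ L P :=
    IntermediateField.adjoin_rootSet_isSplittingField (IsAlgClosed.splits _)
  have hfd : FiniteDimensional ℚ L := Polynomial.IsSplittingField.finiteDimensional L P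
  have hN : Normal ℚ L := Normal.of_isSplittingField P
  have hSL : ∀ x ∈ S, x ∈ L := by
    intro x hx
    apply IntermediateField.subset_adjoin
    rw [Polynomial.mem_rootSet]
    refine ⟨hP0, ?_⟩
    rw [hP, map_prod]
    exact Finset.prod_eq_zero hx (minpoly.aeval ℚ x)
  let cj : ℂ ≃ₐ[ℚ] ℂ := Complex.conjAe.restrictScalars ℚ
  let σ : L ≃ₐ[ℚ] L := cj.restrictNormal L
  have hσ : ∀ x : L, (σ x : ℂ) = (starRingEnd ℂ) (x : ℂ) := fun x =>
    AlgEquiv.restrictNormal_commutes cj L x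
  refine ⟨L, hfd, hN, hSL, σ, hσ, fun h g x => ?_⟩
  have key : (g.comp (σ : L →ₐ[ℚ] L)) = (cj : ℂ →ₐ[ℚ] ℂ).comp g := by
    refine IntermediateField.algHom_ext_of_eq_adjoin ℚ (S := L) (s := P.rootSet ℂ) rfl ?_
    intro s hs
    have hsL : s ∈ L := IntermediateField.subset_adjoin ℚ _ hs
    rw [Polynomial.mem_rootSet] at hs
    have hs2 := hs.2
    rw [hP, map_prod, Finset.prod_eq_zero_iff] at hs2
    obtain ⟨y, hyS, hy⟩ := hs2
    let y' : L := ⟨y, hSL y hyS⟩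
    let s' : L := ⟨s, hsL⟩
    have hconj : IsConjRoot ℚ s' y' := by
      apply IsConjRoot.symm
      rw [isConjRoot_iff_aeval_eq_zero (IsIntegral.of_finite ℚ y')]
      have e1 : minpoly ℚ y' = minpoly ℚ y :=
        (minpoly.algebraMap_eq (algebraMap L ℂ).injective y').symm
      rw [e1]
      apply (algebraMap L ℂ).injective
      rw [map_zero, ← Polynomial.aeval_algebraMap_apply]
      exact hy
    obtain ⟨τ, hτ⟩ := isConjRoot_iff_exists_algEquiv.1 hconj
    have h1 := h y' hyS (L.val.comp (τ : L →ₐ[ℚ] L))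
    have h2 : σ (τ y') = τ (σ y') := by
      apply Subtype.ext
      rw [hσ]
      exact h1.symm
    have h3 := h y' hyS (g.comp (τ : L →ₐ[ℚ] L))
    change g (σ s') = (starRingEnd ℂ) (g s')
    rw [← hτ, h2]
    exact h3
  exact congrArg (fun f => f x) key

lemma real_of_sq (z : ℂ) (e : ℝ) (he : 0 ≤ e) (hz : z ^ 2 = e) (he' : e < 1 / 64) :
    ∃ ρ : ℝ, z = ρ ∧ |ρ| ≤ 1 / 8 := by
  have h1 : √e ≤ 1 / 8 := by
    rw [Real.sqrt_le_left (by norm_num)]; norm_num; linarith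
  have h2 : ((√e : ℝ) : ℂ) ^ 2 = e := by exact_mod_cast Real.sq_sqrt he
  rw [← h2] at hz
  rcases sq_eq_sq_iff_eq_or_eq_neg.1 hz with h | h
  · exact ⟨√e, h, by rwa [abs_of_nonneg (Real.sqrt_nonneg _)]⟩
  · exact ⟨-√e, by rw [h]; simp, by rwa [abs_neg, abs_of_nonneg (Real.sqrt_nonneg _)]⟩

lemma zpow_add_real (z : ℂ) (hz : ‖z‖ = 1) (n : ℤ) :
    ∃ w : ℝ, z ^ n + z ^ (-n) = w ∧ |w| ≤ 2 := by
  have hn : ‖z ^ n‖ = 1 := by rw [norm_zpow, hz, one_zpow]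
  refine ⟨2 * (z ^ n).re, ?_, ?_⟩
  · rw [zpow_neg, Complex.inv_eq_conj hn, Complex.add_conj]
  · rw [abs_mul, abs_two]
    have := Complex.abs_re_le_norm (z ^ n)
    rw [hn] at this
    linarith

/-- If the `ℚ`-algebra of a fusion ring `F` on `Φ` (with `|Φ| = n`) is
isomorphic to a field, then there are: a finite normal extension `𝕃 ⊆ ℂ` of `ℚ` stable under
complex conjugation, with conjugation commuting with all embeddings `𝕃 → ℂ`; a totally
positive `α ∈ 𝕃` with `Tr_{𝕃/ℚ}(|α|²) = 1`; a subfield `K ⊆ 𝕃` of degree `n`; and a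
`ℚ`-algebra isomorphism `θ` from `F` onto `K` with `θ 1 = 1`, `θ (a*) = conj (θ a)`, and
`Tr_{𝕃/ℚ}(|α|² θ a conj (θ b)) = δ_{a,b}`, realising the structure constants as
`N a b c = Tr_{𝕃/ℚ}(|α|² θ a θ b conj (θ c))`. -/
theorem fusionRing_field_realisation
    {Φ : Type} [Fintype Φ] [DecidableEq Φ] (F : FusionRing Φ)
    (hfield : ∃ (K₀ : Type) (instK₀ : Field K₀) (e : (Φ → ℚ) ≃ K₀),
      (∀ x y, e (x + y) = @HAdd.hAdd K₀ K₀ K₀ ⟨instK₀.add⟩ (e x) (e y)) ∧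
      (∀ x y, e (fusionMul F x y) = @HMul.hMul K₀ K₀ K₀ ⟨instK₀.mul⟩ (e x) (e y))) :
    ∃ L : IntermediateField ℚ ℂ, FiniteDimensional ℚ L ∧ Normal ℚ L ∧
      (∃ σ : L ≃ₐ[ℚ] L, (∀ x : L, (σ x : ℂ) = (starRingEnd ℂ) (x : ℂ)) ∧
        (∀ (g : L →ₐ[ℚ] ℂ) (x : L), g (σ x) = (starRingEnd ℂ) (g x))) ∧
      ∃ α : L,
        (∀ g : L →ₐ[ℚ] ℂ, (g α).im = 0 ∧ 0 < (g α).re) ∧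
        (∃ β : L, (β : ℂ) = (α : ℂ) * (starRingEnd ℂ) (α : ℂ) ∧ Algebra.trace ℚ L β = 1) ∧
        ∃ K : IntermediateField ℚ ℂ, K ≤ L ∧ Module.finrank ℚ K = Fintype.card Φ ∧
          ∃ θ : Φ → ℂ,
            (∀ a, θ a ∈ K) ∧
            θ F.one = 1 ∧
            (∀ a, θ (F.star a) = (starRingEnd ℂ) (θ a)) ∧
            (∀ a b, θ a * θ b = ∑ c, (F.N a b c : ℂ) * θ c) ∧
            LinearIndependent ℚ θ ∧
            Submodule.span ℚ (Set.range θ) = Subalgebra.toSubmodule K.toSubalgebra ∧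
            (∀ a b, ∃ γ : L,
              (γ : ℂ) = (α : ℂ) * (starRingEnd ℂ) (α : ℂ) * θ a * (starRingEnd ℂ) (θ b) ∧
              Algebra.trace ℚ L γ = if a = b then 1 else 0) ∧
            (∀ a b c, ∃ γ : L,
              (γ : ℂ) = (α : ℂ) * (starRingEnd ℂ) (α : ℂ) * θ a * θ b * (starRingEnd ℂ) (θ c) ∧
              Algebra.trace ℚ L γ = F.N a b c) := by
  classical
  obtain ⟨K₀, _, _, t, ht1, htm⟩ := FR_field F hfield
  have hfdK : FiniteDimensional ℚ K₀ := t.finiteDimensional_of_finite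
  have hstar : ∀ (g : K₀ →ₐ[ℚ] ℂ) a, g (t (F.star a)) = (starRingEnd ℂ) (g (t a)) := by
    intro g a
    refine FR_char_star F (fun a => g (t a)) (by simp [ht1]) ?_ a
    intro a b
    show g (t a) * g (t b) = _
    rw [← map_mul, htm, map_sum]
    refine Finset.sum_congr rfl fun c _ => ?_
    rw [map_smul, Rat.smul_def]
  set D : K₀ := ∑ a, t a * t (F.star a) with hDdef
  have hDpos : ∀ g : K₀ →ₐ[ℚ] ℂ, ∃ d : ℝ, g D = d ∧ 0 < d := by
    intro g
    refine ⟨∑ a, Complex.normSq (g (t a)), ?_, ?_⟩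
    · rw [hDdef, map_sum]; push_cast
      refine Finset.sum_congr rfl fun a _ => ?_
      rw [map_mul, hstar, Complex.mul_conj]
    · apply Finset.sum_pos' (fun _ _ => Complex.normSq_nonneg _)
      exact ⟨F.one, Finset.mem_univ _, by simp [ht1]⟩
  let φ₀ : K₀ →ₐ[ℚ] ℂ := IsAlgClosed.lift
  have hD0 : D ≠ 0 := by
    intro h
    obtain ⟨d, h1, h2⟩ := hDpos φ₀
    rw [h, map_zero] at h1
    have : d = 0 := by exact_mod_cast h1.symm
    exact h2.ne' this
  obtain ⟨c, hc⟩ := exists_approx_sqrt D hDpos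
  have hc0 : c ≠ 0 := by
    intro h
    obtain ⟨d, s, -, h1, -, h2, -⟩ := hc φ₀
    rw [h, map_zero] at h1
    have : s = 0 := by exact_mod_cast h1.symm
    exact h2.ne' this
  set η : K₀ := c ^ 2 / D - 1 with hη
  have hηD : (c⁻¹) ^ 2 * (1 + η) = D⁻¹ := by
    rw [hη]; field_simp; ring
  have hηg : ∀ g : K₀ →ₐ[ℚ] ℂ, ∃ e : ℝ, g η = e ∧ 0 ≤ e ∧ e < 1 / 64 := by
    intro g
    obtain ⟨d, s, h1, h2, h3, h4, h5, h6⟩ := hc g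
    refine ⟨s ^ 2 / d - 1, ?_, ?_, ?_⟩
    · rw [hη, map_sub, map_div₀, map_pow, h1, h2, map_one]; push_cast; rfl
    · rw [sub_nonneg, le_div_iff₀ h3]; linarith
    · rw [sub_lt_iff_lt_add, div_lt_iff₀ h3]; linarith
  obtain ⟨e₀, he₀, he₀0, -⟩ := hηg φ₀
  let r : ℂ := ((√e₀ : ℝ) : ℂ)
  have hr2 : r ^ 2 = φ₀ η := by
    rw [he₀]; change ((√e₀ : ℝ) : ℂ) ^ 2 = e₀
    exact_mod_cast Real.sq_sqrt he₀0
  have hηint : IsIntegral ℚ (φ₀ η) := (IsIntegral.of_finite ℚ η).map φ₀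
  have hrint : IsIntegral ℚ r := by
    apply IsIntegral.of_pow (n := 2) (by norm_num)
    rw [hr2]; exact hηint
  let M₀ : IntermediateField ℚ ℂ := φ₀.fieldRange ⊔ IntermediateField.adjoin ℚ {r}
  have hfd1 : FiniteDimensional ℚ φ₀.fieldRange :=
    inferInstanceAs (FiniteDimensional ℚ (LinearMap.range φ₀.toLinearMap))
  have hfd2 : FiniteDimensional ℚ (IntermediateField.adjoin ℚ {r}) :=
    IntermediateField.adjoin.finiteDimensional hrint
  have hfdM : FiniteDimensional ℚ M₀ := IntermediateField.finiteDimensional_sup _ _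
  obtain ⟨p, hple, hp⟩ := Nat.exists_infinite_primes (Module.finrank ℚ M₀ + 17)
  have hpos : p ^ 2 ≠ 0 := pow_ne_zero 2 hp.ne_zero
  obtain ⟨ζ, hζ⟩ : ∃ ζ : ℂ, IsPrimitiveRoot ζ (p ^ 2) := ⟨_, Complex.isPrimitiveRoot_exp _ hpos⟩
  let S : Finset ℂ := insert r (insert ζ (Finset.univ.image fun a => φ₀ (t a)))
  have hSint : ∀ x ∈ S, IsIntegral ℚ x := by
    intro x hx
    simp only [S, Finset.mem_insert, Finset.mem_image, Finset.mem_univ, true_and] at hx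
    rcases hx with rfl | rfl | ⟨a, rfl⟩
    · exact hrint
    · exact IsIntegral.of_pow (Nat.pos_of_ne_zero hpos) (by rw [hζ.pow_eq_one]; exact isIntegral_one)
    · exact (IsIntegral.of_finite ℚ (t a)).map φ₀
  obtain ⟨L, hfdL, hN, hSL, σ, hσ, hcomm⟩ := exists_normal_field S hSint
  have hφL : ∀ x, φ₀ x ∈ L := by
    intro x
    rw [← t.sum_repr x, map_sum]
    refine sum_mem fun a _ => ?_
    rw [map_smul]
    exact L.smul_mem (hSL _ (by simp [S]))
  let φ : K₀ →ₐ[ℚ] L := φ₀.codRestrict L.toSubalgebra hφL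
  have hφ : ∀ x, ((φ x : L) : ℂ) = φ₀ x := fun _ => rfl
  let rL : L := ⟨r, hSL r (by simp [S])⟩
  let ζL : L := ⟨ζ, hSL ζ (by simp [S])⟩
  have hrL : rL ^ 2 = φ η := Subtype.ext hr2
  have hζL : IsPrimitiveRoot ζL (p ^ 2) :=
    IsPrimitiveRoot.of_map_of_injective (f := L.val) hζ L.val.injective
  have hgr : ∀ g : L →ₐ[ℚ] ℂ, ∃ ρ : ℝ, g rL = ρ ∧ |ρ| ≤ 1 / 8 := by
    intro g
    obtain ⟨e, h1, h2, h3⟩ := hηg (g.comp φ)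
    refine real_of_sq _ e h2 ?_ h3
    rw [← map_pow, hrL]; exact h1
  have hgζ : ∀ g : L →ₐ[ℚ] ℂ, ‖g ζL‖ = 1 := by
    intro g
    apply Complex.norm_eq_one_of_pow_eq_one (n := p ^ 2) _ hpos
    rw [← map_pow, hζL.pow_eq_one, map_one]
  have hgφ : ∀ (g : L →ₐ[ℚ] ℂ) a, g (φ (t (F.star a))) = (starRingEnd ℂ) (g (φ (t a))) :=
    fun g a => hstar (g.comp φ) a
  have hcomm' : ∀ (g : L →ₐ[ℚ] ℂ) (x : L), g (σ x) = (starRingEnd ℂ) (g x) := by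
    apply hcomm
    intro x hx g
    simp only [S, Finset.mem_insert, Finset.mem_image, Finset.mem_univ, true_and] at hx
    rcases hx with hx | hx | ⟨a, hx⟩
    · have hx' : x = rL := Subtype.ext hx
      have : σ rL = rL := by
        apply Subtype.ext; rw [hσ]; exact Complex.conj_ofReal _
      rw [hx', this]
      obtain ⟨ρ, h1, -⟩ := hgr g
      rw [h1, Complex.conj_ofReal]
    · have hx' : x = ζL := Subtype.ext hx
      have : σ ζL = ζL⁻¹ := by
        apply Subtype.ext
        rw [hσ, IntermediateField.coe_inv, Complex.inv_eq_conj]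
        exact hgζ L.val
      rw [hx', this, map_inv₀, Complex.inv_eq_conj (hgζ g)]
    · have hx' : x = φ (t a) := Subtype.ext hx.symm
      have : σ (φ (t a)) = φ (t (F.star a)) := by
        apply Subtype.ext; rw [hσ]; exact (hgφ L.val a).symm
      rw [hx', this, hgφ]
  -- the subfield `M` of `L`
  have hM₀L : M₀ ≤ L := by
    refine sup_le ?_ ?_
    · rintro _ ⟨x, rfl⟩; exact hφL x
    · rw [IntermediateField.adjoin_simple_le_iff]; exact rL.2
  let M : IntermediateField ℚ L := IntermediateField.restrict hM₀L
  have hMfr : Module.finrank ℚ M < p := by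
    have h : Module.finrank ℚ M₀ = Module.finrank ℚ M :=
      (IntermediateField.restrictAlgEquiv hM₀L).toLinearEquiv.finrank_eq
    omega
  have hφM : ∀ x, φ x ∈ M := fun x => (IntermediateField.mem_restrict hM₀L _).2
    ((le_sup_left : φ₀.fieldRange ≤ M₀) ⟨x, rfl⟩)
  have hrM : rL ∈ M := (IntermediateField.mem_restrict hM₀L _).2
    ((le_sup_right : IntermediateField.adjoin ℚ {r} ≤ M₀)
      (IntermediateField.mem_adjoin_simple_self ℚ r))
  have hqM : ∀ q : ℚ, (q : L) ∈ M := fun q => by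
    have := M.algebraMap_mem q
    rwa [eq_ratCast] at this
  obtain ⟨n, hn, htrn⟩ := trace_hom φ
  have hnQ : (0 : ℚ) < n := by exact_mod_cast hn
  obtain ⟨a, b, b', ha, hab, hb', hlt⟩ := exists_coeffs (1 / n) (by positivity)
  let m0 : L := φ c⁻¹ * (a : L)
  let cc : Fin (4 + 4) → L :=
    Fin.append (fun i => φ c⁻¹ * (b i : L)) (fun i => φ c⁻¹ * rL * (b' i : L))
  let w : Fin (4 + 4) → L := fun i => ζL ^ ((i : ℤ) + 1) + ζL ^ (-((i : ℤ) + 1))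
  let α : L := m0 + ∑ i, cc i * w i
  have hm0M : m0 ∈ M := M.mul_mem (hφM _) (hqM _)
  have hccM : ∀ i, cc i ∈ M := by
    intro i
    refine Fin.addCases (fun i => ?_) (fun i => ?_) i
    · simp only [cc, Fin.append_left]; exact M.mul_mem (hφM _) (hqM _)
    · simp only [cc, Fin.append_right]; exact M.mul_mem (M.mul_mem (hφM _) hrM) (hqM _)
  have hnorm : m0 ^ 2 + 2 * ∑ i, cc i ^ 2 = φ ((1 / n : ℚ) • D⁻¹) := by
    have e1 : ∑ i, cc i ^ 2 = φ c⁻¹ ^ 2 * (((∑ i, b i ^ 2 : ℚ) : L) +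
        φ η * ((∑ i, b' i ^ 2 : ℚ) : L)) := by
      rw [Fin.sum_univ_add]
      simp only [cc, Fin.append_left, Fin.append_right, mul_pow, ← Finset.mul_sum, hrL]
      push_cast
      ring
    have hab' : (a : L) ^ 2 + 2 * ((∑ i, b i ^ 2 : ℚ) : L) = ((1 / n : ℚ) : L) := by
      rw [← hab]; push_cast; ring
    have hb'' : 2 * ((∑ i, b' i ^ 2 : ℚ) : L) = ((1 / n : ℚ) : L) := by
      rw [← hb']; push_cast; ring
    rw [map_smul, ← hηD, Algebra.smul_def, eq_ratCast, map_mul, map_pow, map_add, map_one, e1]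
    have e2 : m0 ^ 2 = φ c⁻¹ ^ 2 * (a : L) ^ 2 := mul_pow _ _ _
    rw [e2]
    linear_combination (φ c⁻¹ ^ 2) * hab' + (φ c⁻¹ ^ 2) * φ η * hb''
  have htrace : ∀ k : K₀, Algebra.trace ℚ L (α ^ 2 * φ k) = Algebra.trace ℚ K₀ (k * D⁻¹) := by
    intro k
    have h1 := trace_sq M p hp (by omega) hMfr ζL hζL (φ k) (hφM k) m0 hm0M cc hccM
    rw [_root_.mul_comm]
    refine h1.trans ?_
    have h2 : φ k * (m0 ^ 2 + 2 * ∑ i, cc i ^ 2) = φ ((1 / n : ℚ) • (k * D⁻¹)) := by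
      rw [hnorm, ← map_mul, mul_smul_comm]
    refine (congrArg _ h2).trans ?_
    rw [htrn, map_smul, smul_eq_mul]
    field_simp
  have hαpos : ∀ g : L →ₐ[ℚ] ℂ, ∃ x : ℝ, g α = x ∧ 0 < x := by
    intro g
    obtain ⟨ρ, hρ, hρ8⟩ := hgr g
    obtain ⟨d, s, -, hs, -, hs0, -⟩ := hc (g.comp φ)
    have hs' : g (φ c⁻¹) = ((s⁻¹ : ℝ) : ℂ) := by
      rw [map_inv₀, map_inv₀]; push_cast; rw [← hs]; rfl
    choose v hv hv2 using fun i : Fin (4 + 4) => zpow_add_real (g ζL) (hgζ g) ((i : ℤ) + 1)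
    let B : Fin (4 + 4) → ℝ := Fin.append (fun i => (b i : ℝ)) (fun i => ρ * (b' i : ℝ))
    have hB : ∀ i, g (cc i) = ((s⁻¹ * B i : ℝ) : ℂ) := by
      intro i
      refine Fin.addCases (fun i => ?_) (fun i => ?_) i
      · simp only [cc, B, Fin.append_left, map_mul, hs', map_ratCast]; push_cast; rfl
      · simp only [cc, B, Fin.append_right, map_mul, hs', hρ, map_ratCast]; push_cast; ring
    refine ⟨s⁻¹ * (a + ∑ i, B i * v i), ?_, ?_⟩
    · have e1 : g m0 = ((s⁻¹ * a : ℝ) : ℂ) := by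
        simp only [m0, map_mul, hs', map_ratCast]; push_cast; rfl
      simp only [α]
      rw [map_add, map_sum, e1]
      have e2 : ∀ i, g (cc i * w i) = ((s⁻¹ * (B i * v i) : ℝ) : ℂ) := by
        intro i
        have : g (w i) = v i := by
          rw [← hv i]; simp only [w, map_add, map_zpow₀]
        rw [map_mul, hB, this]; push_cast; ring
      simp only [e2]
      rw [mul_add, Finset.mul_sum]; push_cast; rfl
    · apply mul_pos (inv_pos.2 hs0)
      have h1 : |∑ i, B i * v i| ≤ 2 * ∑ i, |B i| := by
        refine (Finset.abs_sum_le_sum_abs _ _).trans ?_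
        rw [Finset.mul_sum]
        refine Finset.sum_le_sum fun i _ => ?_
        rw [abs_mul, _root_.mul_comm]
        exact mul_le_mul_of_nonneg_right (hv2 i) (abs_nonneg _)
      have h2 : ∑ i, |B i| = ∑ i, |(b i : ℝ)| + |ρ| * ∑ i, |(b' i : ℝ)| := by
        rw [Fin.sum_univ_add, Finset.mul_sum]
        simp only [B, Fin.append_left, Fin.append_right, abs_mul]
      have h3 : 2 * ∑ i, |(b i : ℝ)| + 1 / 8 * (2 * ∑ i, |(b' i : ℝ)|) < a := by
        have : ((2 * ∑ i, |b i| + 1 / 8 * (2 * ∑ i, |b' i|) : ℚ) : ℝ) < (a : ℝ) := by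
          exact_mod_cast hlt
        push_cast at this
        exact this
      have h4 : |ρ| * ∑ i, |(b' i : ℝ)| ≤ 1 / 8 * ∑ i, |(b' i : ℝ)| :=
        mul_le_mul_of_nonneg_right hρ8 (Finset.sum_nonneg fun _ _ => abs_nonneg _)
      have h5 := neg_abs_le (∑ i, B i * v i)
      linarith
  have hαreal : (starRingEnd ℂ) (α : ℂ) = (α : ℂ) := by
    obtain ⟨x, hx, -⟩ := hαpos L.val
    have hx' : (α : ℂ) = x := hx
    rw [hx', Complex.conj_ofReal]
  have hN1 : ∀ a c, F.N a F.one c = if a = c then 1 else 0 := fun a c => by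
    rw [F.mul_comm, F.one_mul]
  have hmain : ∀ a b c, Algebra.trace ℚ L (α ^ 2 * φ (t a * t b * t (F.star c))) = F.N a b c :=
    fun a b c => by rw [htrace]; exact FR_trace F t htm hD0 a b c
  have hst : ∀ a, φ₀ (t (F.star a)) = (starRingEnd ℂ) (φ₀ (t a)) := hstar φ₀
  refine ⟨L, hfdL, hN, ⟨σ, hσ, hcomm'⟩, α, ?_, ?_, φ₀.fieldRange, ?_, ?_, fun a => φ₀ (t a),
    ?_, ?_, hst, ?_, ?_, ?_, ?_, ?_⟩
  · intro g
    obtain ⟨x, hx, hx0⟩ := hαpos g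
    rw [hx]; exact ⟨Complex.ofReal_im x, hx0⟩
  · refine ⟨α ^ 2, ?_, ?_⟩
    · rw [hαreal, IntermediateField.coe_pow]; ring
    · have := hmain F.one F.one F.one
      rw [F.star_one, ht1, hN1] at this
      simpa using this
  · rintro _ ⟨x, rfl⟩; exact hφL x
  · have h1 : Module.finrank ℚ φ₀.fieldRange = Module.finrank ℚ K₀ :=
      LinearMap.finrank_range_of_inj (f := φ₀.toLinearMap) φ₀.injective
    rw [h1, Module.finrank_eq_card_basis t]
  · intro a; exact ⟨t a, rfl⟩
  · simp [ht1]
  · intro a b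
    simp only
    rw [← map_mul, htm, map_sum]
    refine Finset.sum_congr rfl fun c _ => ?_
    rw [map_smul, Rat.smul_def]
  · exact t.linearIndependent.map' φ₀.toLinearMap (LinearMap.ker_eq_bot.2 φ₀.injective)
  · have h1 : Set.range (fun a => φ₀ (t a)) = φ₀.toLinearMap '' Set.range t := by
      rw [← Set.range_comp]; rfl
    rw [h1, Submodule.span_image, t.span_eq, Submodule.map_top]
    rfl
  · intro a b
    refine ⟨α ^ 2 * φ (t a * t F.one * t (F.star b)), ?_, ?_⟩
    · simp only
      rw [hαreal, ← hst, ht1, mul_one, IntermediateField.coe_mul, IntermediateField.coe_pow, hφ,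
        map_mul]
      ring
    · rw [hmain, hN1]
  · intro a b c
    refine ⟨α ^ 2 * φ (t a * t b * t (F.star c)), ?_, hmain a b c⟩
    simp only
    rw [hαreal, ← hst, IntermediateField.coe_mul, IntermediateField.coe_pow, hφ, map_mul, map_mul]
    ring
end

section
/- Let π be a fusion-homomorphism between fusion rings F(Φ,N) and F(Φ',N'), and let S and S' be the canonical unitary matrices of these two fusion rings. Then there exists a map π' : Φ' → Φ such that S'_{πa, b'} / S'_{1', b'} = S_{a, π'b'} / S_{1, π'b'} for all a ∈ Φ and b' ∈ Φ'. -/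
open scoped BigOperators
open Complex

/-- A fusion-homomorphism between fusion rings, recorded via its action `p : Φ → Φ'` on the
preferred bases: the `ℚ`-linear extension of `p` is multiplicative, i.e. the image of the
product `a·b = ∑_c N a b c · c` equals the product `p a · p b`. -/
def IsFusionHom {Φ Φ' : Type} [Fintype Φ] [DecidableEq Φ] [Fintype Φ'] [DecidableEq Φ']
    (F : FusionRing Φ) (F' : FusionRing Φ') (p : Φ → Φ') : Prop :=
  ∀ a b c', (∑ c, if p c = c' then F.N a b c else 0) = F'.N (p a) (p b) c'

/-- `j ∈ Φ` is a unit of the fusion ring if `j · j* = 1`. -/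
def IsFusionUnit {Φ : Type} [Fintype Φ] [DecidableEq Φ] (F : FusionRing Φ) (j : Φ) : Prop :=
  ∀ c, F.N j (F.star j) c = if c = F.one then 1 else 0

theorem aux_char {Φ : Type} [Fintype Φ] [DecidableEq Φ] (F : FusionRing Φ)
    (S : Matrix Φ Φ ℂ) (hS : IsCanonicalS F S) (a b j : Φ) :
    ∑ c, (F.N a b c : ℂ) * S c j = S a j * S b j / S F.one j := by
  have hu : S.conjTranspose * S = 1 := mul_eq_one_comm.mp hS.1
  have hu' : ∀ i, ∑ c, (starRingEnd ℂ) (S c i) * S c j = if i = j then 1 else 0 := by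
    intro i
    have := congrFun (congrFun hu i) j
    simpa [Matrix.mul_apply, Matrix.one_apply] using this
  calc ∑ c, (F.N a b c : ℂ) * S c j
      = ∑ c, ∑ i, (S a i * S b i / S F.one i) * ((starRingEnd ℂ) (S c i) * S c j) := by
        refine Finset.sum_congr rfl fun c _ => ?_
        rw [hS.2.2.2 a b c, Finset.sum_mul]
        refine Finset.sum_congr rfl fun i _ => ?_
        ring
    _ = ∑ i, (S a i * S b i / S F.one i) * ∑ c, ((starRingEnd ℂ) (S c i) * S c j) := by
        rw [Finset.sum_comm]
        simp only [Finset.mul_sum]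
    _ = _ := by simp [hu']

theorem aux_ne {Φ : Type} [Fintype Φ] [DecidableEq Φ] (F : FusionRing Φ)
    (S : Matrix Φ Φ ℂ) (hS : IsCanonicalS F S) (j : Φ) : S F.one j ≠ 0 := by
  intro h
  have := (hS.2.1 j).2
  simp [h] at this

theorem aux_norm {Φ : Type} [Fintype Φ] [DecidableEq Φ] (F : FusionRing Φ)
    (S : Matrix Φ Φ ℂ) (hS : IsCanonicalS F S) (a : Φ) : ∑ i, Complex.normSq (S a i) = 1 := by
  have := congrFun (congrFun hS.1 a) a
  simp only [Matrix.mul_apply, Matrix.conjTranspose_apply, Matrix.one_apply_eq] at this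
  have h2 : ((∑ i, Complex.normSq (S a i) : ℝ) : ℂ) = 1 := by
    rw [← this]
    push_cast
    refine Finset.sum_congr rfl fun i _ => ?_
    exact (Complex.mul_conj _).symm
  exact_mod_cast h2

/-- Every nonzero character is given by a column of `S`. -/
theorem aux_exists {Φ : Type} [Fintype Φ] [DecidableEq Φ] (F : FusionRing Φ)
    (S : Matrix Φ Φ ℂ) (hS : IsCanonicalS F S) (x : Φ → ℂ)
    (hx : ∀ a b, ∑ c, (F.N a b c : ℂ) * x c = x a * x b) (hx0 : x F.one ≠ 0) :
    ∃ i, ∀ a, x a = S a i / S F.one i := by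
  have hu : S.conjTranspose * S = 1 := mul_eq_one_comm.mp hS.1
  set v : Φ → ℂ := S.conjTranspose.mulVec x with hv
  have hSv : S.mulVec v = x := by
    rw [hv, Matrix.mulVec_mulVec, hS.1, Matrix.one_mulVec]
  have hb : ∀ b, ∑ i, S b i * v i = x b := fun b => congrFun hSv b
  have key : ∀ a, S.mulVec (fun i => v i * (x a - S a i / S F.one i)) = 0 := by
    intro a
    funext b
    have h1 : ∑ i, S b i * v i * (S a i / S F.one i) = x a * x b := by
      rw [← hx a b, ]
      simp only [← hb, Finset.mul_sum]
      rw [Finset.sum_comm]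
      refine Finset.sum_congr rfl fun i _ => ?_
      simp only [← mul_assoc]
      rw [← Finset.sum_mul, aux_char F S hS]
      ring
    simp only [Matrix.mulVec, dotProduct, Pi.zero_apply]
    have h2 : ∑ i, S b i * (v i * (x a - S a i / S F.one i))
        = x a * (∑ i, S b i * v i) - ∑ i, S b i * v i * (S a i / S F.one i) := by
      rw [Finset.mul_sum, ← Finset.sum_sub_distrib]
      refine Finset.sum_congr rfl fun i _ => ?_
      ring
    rw [h2, h1, hb, sub_self]
  have key2 : ∀ a i, v i * (x a - S a i / S F.one i) = 0 := by
    intro a i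
    have h := congrArg S.conjTranspose.mulVec (key a)
    rw [Matrix.mulVec_mulVec, hu, Matrix.one_mulVec, Matrix.mulVec_zero] at h
    exact congrFun h i
  have hex : ∃ i, v i ≠ 0 := by
    by_contra hcon
    push Not at hcon
    apply hx0
    rw [← hb]
    simp [hcon]
  obtain ⟨i, hi⟩ := hex
  exact ⟨i, fun a => sub_eq_zero.mp ((mul_eq_zero.mp (key2 a i)).resolve_left hi)⟩

/-- Given a fusion-homomorphism `π` between fusion rings with canonical
unitary matrices `S`, `S'`, there is a map `π' : Φ' → Φ` with
`S' (π a) b' / S' 1' b' = S a (π' b') / S 1 (π' b')` for all `a`, `b'`. -/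
theorem fusionHom_dual_map_exists
    {Φ Φ' : Type} [Fintype Φ] [DecidableEq Φ] [Fintype Φ'] [DecidableEq Φ']
    (F : FusionRing Φ) (F' : FusionRing Φ') (p : Φ → Φ')
    (hp : IsFusionHom F F' p)
    (S : Matrix Φ Φ ℂ) (S' : Matrix Φ' Φ' ℂ)
    (hS : IsCanonicalS F S) (hS' : IsCanonicalS F' S') :
    ∃ p' : Φ' → Φ, ∀ a b',
      S' (p a) b' / S' F'.one b' = S a (p' b') / S F.one (p' b') := by
  have hmul : ∀ b' a b, ∑ c, (F.N a b c : ℂ) * (S' (p c) b' / S' F'.one b')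
      = (S' (p a) b' / S' F'.one b') * (S' (p b) b' / S' F'.one b') := by
    intro b' a b
    have h1 := aux_char F' S' hS' (p a) (p b) b'
    have h2 : ∑ c, (F.N a b c : ℂ) * S' (p c) b'
        = ∑ c', (F'.N (p a) (p b) c' : ℂ) * S' c' b' := by
      have h3 : ∀ c', (F'.N (p a) (p b) c' : ℂ) = ∑ c, if p c = c' then (F.N a b c : ℂ) else 0 := by
        intro c'
        rw [← hp a b c', Rat.cast_sum]
        refine Finset.sum_congr rfl fun c _ => ?_
        split_ifs <;> simp
      simp only [h3, Finset.sum_mul]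
      rw [Finset.sum_comm]
      refine Finset.sum_congr rfl fun c _ => ?_
      simp [ite_mul]
    simp only [← mul_div_assoc]
    rw [← Finset.sum_div, h2, h1]
    ring
  have hidem : ∀ b', S' (p F.one) b' / S' F'.one b' = 0 ∨ S' (p F.one) b' / S' F'.one b' = 1 := by
    intro b'
    have h := hmul b' F.one F.one
    have h1 : ∀ c, (F.N F.one F.one c : ℂ) = if F.one = c then 1 else 0 := by
      intro c
      rw [F.one_mul]
      split_ifs <;> simp
    simp only [h1, ite_mul, _root_.one_mul, zero_mul,
      Finset.sum_ite_eq, Finset.mem_univ, if_true] at h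
    by_cases h0 : S' (p F.one) b' / S' F'.one b' = 0
    · exact Or.inl h0
    · exact Or.inr (mul_left_cancel₀ h0 (by rw [← h, mul_one]))
  have hle : ∀ i, 0 ≤ Complex.normSq (S' F'.one i) - Complex.normSq (S' (p F.one) i) := by
    intro i
    have hn := aux_ne F' S' hS' i
    rcases hidem i with h | h
    · have : S' (p F.one) i = 0 := (div_eq_zero_iff.mp h).resolve_right hn
      simp [this, Complex.normSq_nonneg]
    · rw [(div_eq_one_iff_eq hn).mp h, sub_self]
  have hsum : ∑ i, (Complex.normSq (S' F'.one i) - Complex.normSq (S' (p F.one) i)) = 0 := by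
    rw [Finset.sum_sub_distrib, aux_norm F' S' hS', aux_norm F' S' hS', sub_self]
  have hne : ∀ b', S' (p F.one) b' / S' F'.one b' ≠ 0 := by
    intro b'
    have hn := aux_ne F' S' hS' b'
    refine div_ne_zero ?_ hn
    intro h0
    have h := (Finset.sum_eq_zero_iff_of_nonneg (fun i _ => hle i)).mp hsum b' (Finset.mem_univ _)
    rw [h0] at h
    simp at h
    exact hn h
  choose p' hp' using fun b' => aux_exists F S hS (fun a => S' (p a) b' / S' F'.one b')
    (hmul b') (hne b')
  exact ⟨p', fun a b' => hp' b' a⟩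
end

section
/- Let π be a fusion-homomorphism between fusion rings F(Φ,N) and F(Φ',N'), and suppose a, b ∈ Φ satisfy π(a) = π(b). Then there exists a unit j ∈ Φ such that b = j·a (the fusion product of j and a, which is a single basis element). Moreover this j satisfies π(j·d) = π(d) for every d ∈ Φ, and if j ≠ 1 then j·d ≠ d for every d ∈ Φ (j has no fixed points). -/
open scoped BigOperators
open Complex

theorem FR_frob {Φ : Type} [Fintype Φ] [DecidableEq Φ] (F : FusionRing Φ) (a b c : Φ) :
    F.N a b c = F.N (F.star b) c a := by
  have h := F.mul_assoc a b (F.star c) F.one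
  have inj : ∀ x y : Φ, F.star x = F.star y ↔ x = y := fun x y =>
    ⟨fun h => by rw [← F.star_involutive x, h, F.star_involutive], fun h => by rw [h]⟩
  simp only [F.N_one, inj, mul_ite, mul_one, mul_zero, Finset.sum_ite_eq, Finset.sum_ite_eq',
    Finset.mem_univ, if_true] at h
  rw [h, ← F.star_hom b (F.star c) (F.star a), F.star_involutive, F.star_involutive]

theorem FR_hom_one {Φ Φ' : Type} [Fintype Φ] [DecidableEq Φ] [Fintype Φ'] [DecidableEq Φ']
    (F : FusionRing Φ) (F' : FusionRing Φ') (p : Φ → Φ')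
    (hp : IsFusionHom F F' p) : p F.one = F'.one := by
  have hee : ∀ c, F'.N (p F.one) (p F.one) c = if p F.one = c then 1 else 0 := by
    intro c
    rw [← hp]
    rw [Finset.sum_eq_single F.one]
    · simp [F.one_mul]
    · intro b _ hb
      simp [F.one_mul, Ne.symm hb]
    · simp
  generalize p F.one = e at hee
  by_contra hne
  have h := F'.mul_assoc e (F'.star e) e e
  have h2 := F'.mul_assoc (F'.star e) e e e
  have e1 : ∑ d, F'.N e e d * F'.N (F'.star e) d e = F'.N (F'.star e) e e := by
    simp [hee]
  rw [e1] at h2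
  have h3 : ∑ d ∈ ({F'.one, e} : Finset Φ'), F'.N (F'.star e) e d * F'.N d e e ≤
      ∑ d, F'.N (F'.star e) e d * F'.N d e e :=
    Finset.sum_le_sum_of_subset_of_nonneg (Finset.subset_univ _)
      (fun i _ _ => mul_nonneg (F'.N_nonneg _ _ _) (F'.N_nonneg _ _ _))
  rw [Finset.sum_pair (Ne.symm hne), h2, F'.N_one, F'.one_mul, hee, F'.star_involutive] at h3
  simp at h3
  linarith

/-- Each coefficient is bounded by its image. -/
theorem FR_le {Φ Φ' : Type} [Fintype Φ] [DecidableEq Φ] [Fintype Φ'] [DecidableEq Φ']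
    (F : FusionRing Φ) (F' : FusionRing Φ') (p : Φ → Φ')
    (hp : IsFusionHom F F' p) (a b c : Φ) : F.N a b c ≤ F'.N (p a) (p b) (p c) := by
  rw [← hp]
  have := Finset.single_le_sum (f := fun x => if p x = p c then F.N a b x else 0)
    (fun i _ => by split_ifs; exacts [F.N_nonneg _ _ _, le_rfl]) (Finset.mem_univ c)
  simpa using this

theorem FR_hom_star {Φ Φ' : Type} [Fintype Φ] [DecidableEq Φ] [Fintype Φ'] [DecidableEq Φ']
    (F : FusionRing Φ) (F' : FusionRing Φ') (p : Φ → Φ')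
    (hp : IsFusionHom F F' p) (a : Φ) : p (F.star a) = F'.star (p a) := by
  have h := FR_le F F' p hp a (F.star a) F.one
  rw [FR_hom_one F F' p hp, F.N_one, F'.N_one] at h
  by_contra hne
  rw [if_neg hne] at h
  norm_num at h

theorem FR_ker {Φ Φ' : Type} [Fintype Φ] [DecidableEq Φ] [Fintype Φ'] [DecidableEq Φ']
    (F : FusionRing Φ) (F' : FusionRing Φ') (p : Φ → Φ')
    (hp : IsFusionHom F F' p) (a c : Φ) (hc : p c = F'.one) (hne : c ≠ F.one) :
    F.N a (F.star a) c = 0 := by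
  have h := hp a (F.star a) F'.one
  rw [F'.N_one, if_pos (FR_hom_star F F' p hp a)] at h
  have h3 := Finset.sum_le_sum_of_subset_of_nonneg
    (f := fun x => if p x = F'.one then F.N a (F.star a) x else 0)
    (Finset.subset_univ ({F.one, c} : Finset Φ))
      (fun i _ _ => by split_ifs; exacts [F.N_nonneg _ _ _, le_rfl])
  rw [Finset.sum_pair (Ne.symm hne), h] at h3
  simp only [hc, FR_hom_one F F' p hp, if_true, F.N_one] at h3
  have := F.N_nonneg a (F.star a) c
  linarith

/-- If a fusion-homomorphism `π` identifies `a` and `b`, then `b = j·a` for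
some unit `j`; multiplication by this `j` permutes the basis (`j·d` is a single basis element
`Jp d`), `π (j·d) = π d` for all `d`, and if `j ≠ 1` then `j` acts without fixed points. -/
theorem fusionHom_eq_implies_unit_relation
    {Φ Φ' : Type} [Fintype Φ] [DecidableEq Φ] [Fintype Φ'] [DecidableEq Φ']
    (F : FusionRing Φ) (F' : FusionRing Φ') (p : Φ → Φ')
    (hp : IsFusionHom F F' p) (a b : Φ) (hab : p a = p b) :
    ∃ j : Φ, IsFusionUnit F j ∧
      ∃ Jp : Φ → Φ,
        (∀ d c, F.N j d c = if c = Jp d then 1 else 0) ∧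
        Jp a = b ∧
        (∀ d, p (Jp d) = p d) ∧
        (j ≠ F.one → ∀ d, Jp d ≠ d) := by
  have h1 := FR_hom_one F F' p hp
  have hs := FR_hom_star F F' p hp
  obtain ⟨j, hj1, hj⟩ : ∃ j, p j = F'.one ∧ F.N b (F.star a) j ≠ 0 := by
    by_contra hcon
    push Not at hcon
    have h := hp b (F.star a) F'.one
    rw [F'.N_one, hs, hab, if_pos rfl, Finset.sum_eq_zero] at h
    · norm_num at h
    · intro c _
      split_ifs with hc
      · exact hcon c hc
      · rfl
  have hunit : IsFusionUnit F j := by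
    intro c
    split_ifs with hc
    · rw [hc, F.N_one, if_pos rfl]
    · by_cases hpc : p c = F'.one
      · exact FR_ker F F' p hp j c hpc hc
      · have h := FR_le F F' p hp j (F.star j) c
        rw [hs, hj1, F'.star_one, F'.one_mul, if_neg (Ne.symm hpc)] at h
        exact le_antisymm h (F.N_nonneg _ _ _)
  have hpx : ∀ d x, F.N j d x ≠ 0 → p x = p d := by
    intro d x hx
    by_contra hne
    have h := FR_le F F' p hp j d x
    rw [hj1, F'.one_mul, if_neg (Ne.symm hne)] at h
    exact hx (le_antisymm h (F.N_nonneg _ _ _))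
  have hsum : ∀ d, ∑ x, F.N j d x = 1 := by
    intro d
    have h := hp j d (p d)
    rw [hj1, F'.one_mul, if_pos rfl] at h
    rw [← h]
    refine Finset.sum_congr rfl fun x _ => ?_
    split_ifs with hx
    · rfl
    · by_contra h0
      exact hx (hpx d x h0)
  have hsq : ∀ d, ∑ x, F.N j d x * F.N j d x = 1 := by
    intro d
    have h := F.mul_assoc (F.star j) j d d
    simp only [F.mul_comm (F.star j) j, hunit _, ite_mul, zero_mul, Finset.sum_ite_eq',
      Finset.mem_univ, if_true, F.one_mul, _root_.one_mul] at h
    rw [h]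
    refine Finset.sum_congr rfl fun x _ => ?_
    rw [← FR_frob F d j x, F.mul_comm d j x]
  have hle : ∀ d x, F.N j d x ≤ 1 := by
    intro d x
    rw [← hsum d]
    exact Finset.single_le_sum (fun i _ => F.N_nonneg j d i) (Finset.mem_univ x)
  have h01 : ∀ d x, F.N j d x ≠ 0 → F.N j d x = 1 := by
    intro d x hx
    have hz : ∑ x, (F.N j d x - F.N j d x * F.N j d x) = 0 := by
      rw [Finset.sum_sub_distrib, hsum, hsq, sub_self]
    have h := (Finset.sum_eq_zero_iff_of_nonneg (fun i _ => by
      nlinarith [F.N_nonneg j d i, hle d i])).1 hz x (Finset.mem_univ x)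
    have h' : F.N j d x * (1 - F.N j d x) = 0 := by linarith
    rcases mul_eq_zero.1 h' with h0 | h0
    · exact absurd h0 hx
    · linarith
  have huniq : ∀ d x y, F.N j d x ≠ 0 → F.N j d y ≠ 0 → x = y := by
    intro d x y hx hy
    by_contra hne
    have h := Finset.sum_le_sum_of_subset_of_nonneg (f := fun i => F.N j d i)
      (Finset.subset_univ ({x, y} : Finset Φ)) (fun i _ _ => F.N_nonneg _ _ _)
    rw [Finset.sum_pair hne, hsum, h01 d x hx, h01 d y hy] at h
    norm_num at h
  have hex : ∀ d, ∃ x, F.N j d x ≠ 0 := by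
    intro d
    by_contra hcon
    push Not at hcon
    have h := hsum d
    rw [Finset.sum_eq_zero (fun x _ => hcon x)] at h
    norm_num at h
  choose Jp hJ using hex
  refine ⟨j, hunit, Jp, ?_, ?_, fun d => hpx d _ (hJ d), ?_⟩
  · intro d c
    split_ifs with hc
    · rw [hc]; exact h01 d _ (hJ d)
    · by_contra h0
      exact hc (huniq d _ _ h0 (hJ d))
  · apply huniq a _ _ (hJ a)
    rwa [FR_frob, F.star_involutive, F.mul_comm] at hj
  · intro hne d hd
    have h := hJ d
    rw [hd, FR_frob, F.mul_comm] at h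
    exact h (FR_ker F F' p hp d j hj1 hne)
end
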